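/- arXiv:2106.09615 — 2 statements merged into one kernel-verified Lean document; each statement's English description precedes it below -/
import Mathlib

section
/- There exist absolute constants c > 0, K ≥ 1 and c0 > 0 such that the following holds. Let p be a prime, g a primitive root modulo p, and define exp : F_p^* → F_p^* by exp(x) = g^{ι(x)}, where ι(x) ∈ {1, …, p−1} is the integer representative of x. Then for every finite set A ⊆ F_p^* with |A| < sqrt(p), one has max{ Sid^+_K(A), Sid^+_K(exp(A)) } ≥ c0·|A|^{1/2 + c}, where exp(A) = {exp(a) : a ∈ A}. -/
open scoped BigOperators

/-- The number of pairs `(x, y) ∈ S × S` with `x - y = mu`. -/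
noncomputable def subPairCount {F : Type*} [Sub F] (mu : F) (S : Finset F) : ℕ :=
  Set.ncard {q : F × F | q.1 ∈ S ∧ q.2 ∈ S ∧ q.1 - q.2 = mu}

/-- `S` is additively `K`-Sidon: for every `mu ≠ 0` the number of pairs
`(x, y) ∈ S × S` with `x - y = mu` is at most `K`. -/
def IsAddSidon {F : Type*} [SubtractionMonoid F] (K : ℝ) (S : Finset F) : Prop :=
  ∀ mu : F, mu ≠ 0 → (subPairCount mu S : ℝ) ≤ K

/-!
Suppose neither `A` nor `B = exp A` has a large `K`-Sidon subset. Random deletion then gives every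
large subset of `A` or `B` many popular differences, already on each of a long sequence of scales
of popularity. Since `exp (x + μ)` is `exp μ * exp x` or `exp μ * g⁻¹ * exp x`, a popular difference
of a subset of `A` gives a popular ratio of its image, so every large subset of `B` has both many
popular differences and many popular ratios. By pigeonhole some scale has about as many popular
differences as a much finer one; there Balog–Szemerédi–Gowers arguments produce a set with small
doubling and many dilates with which it has small sumset, and a pivot argument contradicts the
smallness of `B` relative to `p`.
-/

namespace ExpSidon

open Finset
open scoped Pointwise

section Counting

variable {ι α : Type*}

lemma sum_card_filter_comm (I : Finset ι) (X : Finset α) (R : ι → α → Prop) [DecidableRel R] :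
    ∑ i ∈ I, (#{x ∈ X | R i x} : ℝ) = ∑ x ∈ X, (#{i ∈ I | R i x} : ℝ) :=
  mod_cast sum_card_bipartiteAbove_eq_sum_card_bipartiteBelow R

lemma sq_sum_card_filter_le (I : Finset ι) (X : Finset α) (R : ι → α → Prop) [DecidableRel R] :
    (∑ i ∈ I, (#{x ∈ X | R i x} : ℝ)) ^ 2 ≤
      #X * ∑ i ∈ I, ∑ j ∈ I, (#{x ∈ X | R i x ∧ R j x} : ℝ) := by
  have count_pairs : ∑ i ∈ I, ∑ j ∈ I, (#{x ∈ X | R i x ∧ R j x} : ℝ) =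
      ∑ x ∈ X, (#{i ∈ I | R i x} : ℝ) ^ 2 := by
    rw [← sum_product' (f := fun i j => (#{x ∈ X | R i x ∧ R j x} : ℝ)),
      sum_card_filter_comm (I ×ˢ I) X fun q x => R q.1 x ∧ R q.2 x]
    refine sum_congr rfl fun x _ => ?_
    rw [filter_product (fun i => R i x) fun i => R i x, card_product, Nat.cast_mul, sq]
  rw [count_pairs, sum_card_filter_comm]
  exact sq_sum_le_card_mul_sum_sq

lemma half_mul_card_le_card_filter {X : Finset ι} {f : ι → ℝ} {M η : ℝ} (hM : 0 < M)
    (hf : ∀ x ∈ X, f x ≤ M) (hsum : η * (M * #X) ≤ ∑ x ∈ X, f x) :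
    η / 2 * #X ≤ #{x ∈ X | η / 2 * M ≤ f x} := by
  obtain hη | hη := le_total η 0
  · exact (mul_nonpos_of_nonpos_of_nonneg (by linarith) (by positivity)).trans (by positivity)
  have large : ∑ x ∈ X with η / 2 * M ≤ f x, f x ≤ #{x ∈ X | η / 2 * M ≤ f x} * M := by
    rw [← nsmul_eq_mul]
    exact sum_le_card_nsmul _ _ _ fun x hx => hf x (filter_subset _ _ hx)
  have small : ∑ x ∈ X with ¬ η / 2 * M ≤ f x, f x ≤ #X * (η / 2 * M) := by
    refine (sum_le_card_nsmul _ _ (η / 2 * M) fun x hx =>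
      (not_le.1 (mem_filter.1 hx).2).le).trans ?_
    rw [nsmul_eq_mul]
    gcongr
    exact filter_subset _ _
  rw [← sum_filter_add_sum_filter_not X (fun x => η / 2 * M ≤ f x)] at hsum
  exact le_of_mul_le_mul_right (by linarith) hM

lemma exists_le_mul_of_lt_pow_mul {s : ℕ → ℝ} {T : ℝ} (hT : 0 ≤ T) {J : ℕ}
    (h : s J < T ^ J * s 0) : ∃ j < J, s (j + 1) ≤ T * s j := by
  by_contra! growth
  have lower : ∀ j ≤ J, T ^ j * s 0 ≤ s j := by
    intro j
    induction j with
    | zero => simp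
    | succ j ih =>
      intro hj
      calc T ^ (j + 1) * s 0 = T * (T ^ j * s 0) := by ring
        _ ≤ T * s j := by gcongr; exact ih (by lia)
        _ ≤ s (j + 1) := (growth j (by lia)).le
  exact (lower J le_rfl).not_gt h

end Counting

section BalogSzemerediGowers

variable {α β : Type*}

/-- The common neighbours in `Y` of two vertices of a bipartite graph. -/
def commonNbrs (Y : Finset β) (R : β → α → Prop) [DecidableRel R] (x x' : α) : Finset β :=
  {y ∈ Y | R y x ∧ R y x'}

variable {X : Finset α} {Y : Finset β} {R : β → α → Prop} [DecidableRel R] {η : ℝ}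

-- Dependent random choice: the neighbourhood of a random `y ∈ Y` contains, on average, few pairs
-- with few common neighbours, because such a pair is rarely captured.
lemma exists_subset_few_pairs_card_commonNbrs_lt (hX : X.Nonempty) (hY : Y.Nonempty) (hη : 0 < η)
    (h : η * #X * #Y ≤ ∑ y ∈ Y, (#{x ∈ X | R y x} : ℝ)) :
    ∃ X' ⊆ X, η * #X / 2 ≤ #X' ∧
      (#{q ∈ X' ×ˢ X' | (#(commonNbrs Y R q.1 q.2) : ℝ) < η ^ 2 * #Y / 16} : ℝ) ≤
        (#X' : ℝ) ^ 2 / 8 := by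
  set bad : Finset (α × α) :=
    {q ∈ X ×ˢ X | (#(commonNbrs Y R q.1 q.2) : ℝ) < η ^ 2 * #Y / 16}
  set captured : β → ℝ := fun y => #{q ∈ bad | R y q.1 ∧ R y q.2} with hcaptured
  have sum_captured : ∑ y ∈ Y, captured y ≤ #Y * (η ^ 2 * #X ^ 2 / 16) := by
    rw [hcaptured, sum_card_filter_comm Y bad fun y q => R y q.1 ∧ R y q.2]
    calc ∑ q ∈ bad, (#(commonNbrs Y R q.1 q.2) : ℝ) ≤ #bad • (η ^ 2 * #Y / 16) :=
          sum_le_card_nsmul _ _ _ fun q hq => (mem_filter.1 hq).2.le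
      _ ≤ (#X * #X : ℕ) • (η ^ 2 * #Y / 16) := by
          gcongr
          exact (card_filter_le _ _).trans_eq (card_product _ _)
      _ = #Y * (η ^ 2 * #X ^ 2 / 16) := by rw [nsmul_eq_mul]; push_cast; ring
  have sum_sq : #Y * (η ^ 2 * #X ^ 2) ≤ ∑ y ∈ Y, (#{x ∈ X | R y x} : ℝ) ^ 2 := by
    refine le_of_mul_le_mul_left ?_ (Nat.cast_pos.2 hY.card_pos)
    calc #Y * (#Y * (η ^ 2 * #X ^ 2)) = (η * #X * #Y) ^ 2 := by ring
      _ ≤ (∑ y ∈ Y, (#{x ∈ X | R y x} : ℝ)) ^ 2 := by gcongr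
      _ ≤ #Y * ∑ y ∈ Y, (#{x ∈ X | R y x} : ℝ) ^ 2 := sq_sum_le_card_mul_sum_sq
  obtain ⟨y, -, hy⟩ : ∃ y ∈ Y,
      η ^ 2 * #X ^ 2 / 2 ≤ (#{x ∈ X | R y x} : ℝ) ^ 2 - 8 * captured y := by
    refine exists_le_of_sum_le hY ?_
    rw [sum_const, nsmul_eq_mul, sum_sub_distrib, ← mul_sum]
    linarith
  refine ⟨({x ∈ X | R y x} : Finset α), filter_subset _ _,
    le_of_sq_le_sq ?_ (Nat.cast_nonneg _), ?_⟩
  · have : 0 ≤ captured y := Nat.cast_nonneg _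
    linarith [sq_nonneg (η * #X)]
  · rw [← filter_product (R y) (R y), filter_comm]
    linarith [sq_nonneg (η * #X)]

lemma exists_subset_card_filter_le (bad : α → α → Prop) [DecidableRel bad]
    (h : (#{q ∈ X ×ˢ X | bad q.1 q.2} : ℝ) ≤ (#X : ℝ) ^ 2 / 8) :
    ∃ S ⊆ X, (#X : ℝ) / 2 ≤ #S ∧ ∀ x ∈ S, (#{x' ∈ X | bad x x'} : ℝ) ≤ #X / 4 := by
  set f : α → ℝ := fun x => #{x' ∈ X | bad x x'}
  have sum_f : (#{q ∈ X ×ˢ X | bad q.1 q.2} : ℝ) = ∑ x ∈ X, f x := by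
    simp only [f, card_filter, sum_product, Nat.cast_sum]
  have markov : (#{x ∈ X | ¬ f x ≤ #X / 4} : ℝ) * (#X / 4) ≤ (#X : ℝ) ^ 2 / 8 := by
    rw [← nsmul_eq_mul]
    refine (card_nsmul_le_sum _ f _ fun x hx => (not_le.1 (mem_filter.1 hx).2).le).trans
      (le_trans ?_ (sum_f.ge.trans h))
    exact sum_le_sum_of_subset_of_nonneg (filter_subset _ _) fun _ _ _ => Nat.cast_nonneg _
  have split : (#{x ∈ X | f x ≤ #X / 4} : ℝ) + #{x ∈ X | ¬ f x ≤ #X / 4} = #X :=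
    mod_cast card_filter_add_card_filter_not (s := X) fun x => f x ≤ #X / 4
  refine ⟨{x ∈ X | f x ≤ #X / 4}, filter_subset _ _, ?_, fun x hx => (mem_filter.1 hx).2⟩
  by_contra! hlt
  nlinarith

lemma exists_subset_many_card_commonNbrs_ge (hX : X.Nonempty) (hY : Y.Nonempty) (hη : 0 < η)
    (h : η * #X * #Y ≤ ∑ y ∈ Y, (#{x ∈ X | R y x} : ℝ)) :
    ∃ S ⊆ X, η * #X / 4 ≤ #S ∧ ∀ x₁ ∈ S, ∀ x₂ ∈ S, η * #X / 4 ≤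
      #{x ∈ X | η ^ 2 * #Y / 16 ≤ #(commonNbrs Y R x₁ x) ∧
        η ^ 2 * #Y / 16 ≤ #(commonNbrs Y R x₂ x)} := by
  classical
  obtain ⟨X', hX'X, hX', few_bad⟩ := exists_subset_few_pairs_card_commonNbrs_lt hX hY hη h
  set m : ℝ := η ^ 2 * #Y / 16
  obtain ⟨S, hSX', hS, hbad⟩ := exists_subset_card_filter_le
    (fun x x' => (#(commonNbrs Y R x x') : ℝ) < m) few_bad
  refine ⟨S, hSX'.trans hX'X, by linarith, fun x₁ hx₁ x₂ hx₂ => ?_⟩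
  set B : α → Finset α := fun x => {x' ∈ X' | (#(commonNbrs Y R x x') : ℝ) < m} with hB
  have good : X' \ (B x₁ ∪ B x₂) ⊆
      {x ∈ X | m ≤ #(commonNbrs Y R x₁ x) ∧ m ≤ #(commonNbrs Y R x₂ x)} := by
    intro x hx
    simp only [hB, mem_sdiff, mem_union, mem_filter, not_or, not_and, not_lt] at hx
    exact mem_filter.2 ⟨hX'X hx.1, hx.2.1 hx.1, hx.2.2 hx.1⟩
  have card_good : #X' ≤ #(X' \ (B x₁ ∪ B x₂)) + (#(B x₁) + #(B x₂)) :=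
    card_le_card_sdiff_add_card.trans (Nat.add_le_add_left (card_union_le _ _) _)
  have := card_le_card good
  rify at card_good this
  linarith [hbad x₁ hx₁, hbad x₂ hx₂]

lemma le_card_differences_of_commonNbrs {G : Type*} [AddCommGroup G] [DecidableEq G]
    {Y Z V : Finset G} {x₁ x₂ : G} {m : ℝ} (hm : 0 ≤ m)
    (hV : ∀ x ∈ V, m ≤ #(commonNbrs Y (fun y x => x - y ∈ Z) x₁ x) ∧
      m ≤ #(commonNbrs Y (fun y x => x - y ∈ Z) x₂ x)) :
    #V * m ^ 2 ≤
      #{z ∈ (Z ×ˢ Z) ×ˢ (Z ×ˢ Z) | z.1.1 - z.1.2 + (z.2.1 - z.2.2) = x₁ - x₂} := by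
  set N := commonNbrs Y fun y x => x - y ∈ Z
  calc #V * m ^ 2 ≤ ∑ x ∈ V, (#(N x₁ x ×ˢ N x₂ x) : ℝ) := by
        rw [← nsmul_eq_mul]
        refine card_nsmul_le_sum _ _ _ fun x hx => ?_
        rw [card_product, sq, Nat.cast_mul]
        exact mul_le_mul (hV x hx).1 (hV x hx).2 hm (Nat.cast_nonneg _)
    _ = #(V.sigma fun x => N x₁ x ×ˢ N x₂ x) := by rw [card_sigma, Nat.cast_sum]
    _ ≤ _ := by
        refine Nat.cast_le.2 <| card_le_card_of_injOn
          (fun u => ((x₁ - u.2.1, u.1 - u.2.1), (u.1 - u.2.2, x₂ - u.2.2))) ?_ ?_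
        · rintro ⟨x, y₁, y₂⟩ hu
          simp only [N, commonNbrs, coe_sigma, Set.mem_sigma_iff, mem_coe, mem_product,
            mem_filter] at hu ⊢
          exact ⟨by tauto, by abel⟩
        · rintro ⟨x, y₁, y₂⟩ - ⟨x', y₁', y₂'⟩ - heq
          simp only [Prod.mk.injEq, sub_right_inj] at heq
          obtain ⟨⟨rfl, hx⟩, -, rfl⟩ := heq
          rw [sub_left_inj.1 hx]

theorem exists_subset_card_sub_le {G : Type*} [AddCommGroup G] [DecidableEq G] {P Z : Finset G}
    {η : ℝ} (hP : P.Nonempty) (hη : 0 < η)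
    (h : η * (#P : ℝ) ^ 2 ≤ ∑ y ∈ P, (#{x ∈ P | x - y ∈ Z} : ℝ)) :
    ∃ S ⊆ P, η * #P / 4 ≤ #S ∧ #(S - S) * (η ^ 5 * (#P : ℝ) ^ 3) ≤ 1024 * (#Z : ℝ) ^ 4 := by
  obtain ⟨S, hSP, hS, many⟩ := exists_subset_many_card_commonNbrs_ge hP hP hη
    (R := fun y x => x - y ∈ Z) (by rwa [mul_assoc, ← sq])
  refine ⟨S, hSP, hS, ?_⟩
  set reps : G → Finset ((G × G) × (G × G)) := fun d =>
    {z ∈ (Z ×ˢ Z) ×ˢ (Z ×ˢ Z) | z.1.1 - z.1.2 + (z.2.1 - z.2.2) = d}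
  have many_reps : ∀ d ∈ S - S, η ^ 5 * (#P : ℝ) ^ 3 / 1024 ≤ #(reps d) := by
    intro d hd
    obtain ⟨x₁, hx₁, x₂, hx₂, rfl⟩ := mem_sub.1 hd
    calc η ^ 5 * (#P : ℝ) ^ 3 / 1024 = η * #P / 4 * (η ^ 2 * #P / 16) ^ 2 := by ring
      _ ≤ _ := by gcongr; exact many x₁ hx₁ x₂ hx₂
      _ ≤ #(reps (x₁ - x₂)) := le_card_differences_of_commonNbrs (by positivity) fun x hx =>
          (mem_filter.1 hx).2
  have sum_reps : ∑ d ∈ S - S, (#(reps d) : ℝ) ≤ (#Z : ℝ) ^ 4 := by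
    have : ∑ d ∈ S - S, #(reps d) ≤ #((Z ×ˢ Z) ×ˢ (Z ×ˢ Z)) := by
      rw [sum_card_fiberwise_eq_card_filter]
      exact card_filter_le _ _
    simp only [card_product] at this
    rify at this
    linarith
  have := card_nsmul_le_sum _ _ _ many_reps
  rw [nsmul_eq_mul] at this
  linarith

end BalogSzemerediGowers

section GoodDilates

variable {F : Type*} [Field F] [DecidableEq F] {P : Finset F} {K L : ℝ} {a b : F}

/-- `a` is a `K`-good dilate of `P` if `P - a • P` is at most `K` times as large as `P`. The good
dilates of a set with small difference set form an approximate subfield. -/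
def IsGoodDilate (K : ℝ) (P : Finset F) (a : F) : Prop :=
  (#(P - a • P) : ℝ) ≤ K * #P

lemma smul_finset_sub (a : F) (P Q : Finset F) : a • (P - Q) = a • P - a • Q :=
  image_image₂_distrib (smul_sub a)

lemma card_sub_comm (P Q : Finset F) : #(P - Q) = #(Q - P) := by
  rw [← card_neg (P - Q), neg_sub]

lemma card_smul_sub_smul (ha : a ≠ 0) (b : F) (P : Finset F) :
    #(a • P - (a * b) • P) = #(P - b • P) := by
  rw [mul_smul, ← smul_finset_sub, card_smul_finset₀ ha]

namespace IsGoodDilate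

lemma empty (K : ℝ) (a : F) : IsGoodDilate K ∅ a := by simp [IsGoodDilate]

lemma mono (h : IsGoodDilate K P a) (hKL : K ≤ L) : IsGoodDilate L P a :=
  h.trans (by gcongr)

lemma zero (hK : 1 ≤ K) (P : Finset F) : IsGoodDilate K P 0 := by
  obtain rfl | hP := P.eq_empty_or_nonempty
  · exact empty K 0
  · rw [IsGoodDilate, zero_smul_finset hP, ← singleton_zero, sub_singleton]
    simpa using le_mul_of_one_le_left (Nat.cast_nonneg _) hK

lemma mul (hK : 1 ≤ K) (hL : 1 ≤ L) (ha : IsGoodDilate K P a) (hb : IsGoodDilate L P b) :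
    IsGoodDilate (K * L) P (a * b) := by
  obtain rfl | ha₀ := eq_or_ne a 0
  · rw [zero_mul]
    exact zero (one_le_mul_of_one_le_of_one_le hK hL) P
  obtain rfl | hP := P.eq_empty_or_nonempty
  · exact empty _ _
  have triangle : (#(P - (a * b) • P) : ℝ) * #P ≤ #(P - a • P) * #(P - b • P) := by
    have := ruzsa_triangle_inequality_sub_sub_sub P (a • P) ((a * b) • P)
    rw [card_smul_finset₀ ha₀, card_sub_comm ((a * b) • P), card_smul_sub_smul ha₀] at this
    exact mod_cast this
  refine le_of_mul_le_mul_right ?_ (Nat.cast_pos.2 hP.card_pos : (0 : ℝ) < #P)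
  calc (#(P - (a * b) • P) : ℝ) * #P ≤ #(P - a • P) * #(P - b • P) := triangle
    _ ≤ (K * #P) * (L * #P) := by gcongr <;> assumption
    _ = K * L * #P * #P := by ring

lemma inv (ha : IsGoodDilate K P a) : IsGoodDilate K P a⁻¹ := by
  obtain rfl | ha₀ := eq_or_ne a 0
  · rwa [inv_zero]
  · rwa [IsGoodDilate, ← card_smul_sub_smul ha₀, mul_inv_cancel₀ ha₀, one_smul, card_sub_comm]

lemma card_nsmul_sub_nsmul_le (hP : P.Nonempty) (ha : IsGoodDilate K P a)
    (hb : IsGoodDilate K P b) (h₁ : IsGoodDilate K P 1) (m n : ℕ) :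
    (#(m • (P ∪ a • P ∪ b • P) - n • (P ∪ a • P ∪ b • P)) : ℝ) ≤ (3 * K) ^ (m + n) * #P := by
  set U := P ∪ a • P ∪ b • P
  have doubling : (#(P - U) : ℝ) / #P ≤ 3 * K := by
    rw [div_le_iff₀ (Nat.cast_pos.2 hP.card_pos)]
    have : #(P - U) ≤ #(P - P) + #(P - a • P) + #(P - b • P) := by
      rw [sub_union, sub_union]
      exact (card_union_le _ _).trans (Nat.add_le_add_right (card_union_le _ _) _)
    rify at this
    rw [IsGoodDilate, one_smul] at h₁
    rw [IsGoodDilate] at ha hb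
    linarith
  have pluennecke := (NNRat.cast_le (K := ℝ)).2
    (pluennecke_ruzsa_inequality_nsmul_sub_nsmul_sub hP U m n)
  push_cast at pluennecke
  exact pluennecke.trans (by gcongr)

lemma of_sub_smul_subset {c : F} (ha : IsGoodDilate K P a)
    (hb : IsGoodDilate K P b) (hK : 27 ≤ K) (h₁ : IsGoodDilate K P 1) {m n : ℕ} (hmn : m + n = 3)
    (hc : P - c • P ⊆ m • (P ∪ a • P ∪ b • P) - n • (P ∪ a • P ∪ b • P)) :
    IsGoodDilate (K ^ 4) P c := by
  obtain rfl | hP := P.eq_empty_or_nonempty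
  · exact empty _ _
  calc (#(P - c • P) : ℝ) ≤ (3 * K) ^ (m + n) * #P :=
        (Nat.cast_le.2 (card_le_card hc)).trans (card_nsmul_sub_nsmul_le hP ha hb h₁ m n)
    _ = 27 * K ^ 3 * #P := by rw [hmn]; ring
    _ ≤ K * K ^ 3 * #P := by gcongr
    _ = K ^ 4 * #P := by ring

lemma add (ha : IsGoodDilate K P a) (hb : IsGoodDilate K P b) (hK : 27 ≤ K)
    (h₁ : IsGoodDilate K P 1) : IsGoodDilate (K ^ 4) P (a + b) := by
  refine of_sub_smul_subset ha hb hK h₁ (m := 1) (n := 2) rfl ?_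
  intro z hz
  obtain ⟨x, hx, _, hay, rfl⟩ := mem_sub.1 hz
  obtain ⟨y, hy, rfl⟩ := mem_smul_finset.1 hay
  rw [one_nsmul, two_nsmul, add_smul]
  refine sub_mem_sub ?_ (add_mem_add ?_ ?_) <;>
    simp only [mem_union, hx, smul_mem_smul_finset hy, true_or, or_true]

lemma sub (ha : IsGoodDilate K P a) (hb : IsGoodDilate K P b) (hK : 27 ≤ K)
    (h₁ : IsGoodDilate K P 1) : IsGoodDilate (K ^ 4) P (a - b) := by
  refine of_sub_smul_subset ha hb hK h₁ (m := 2) (n := 1) rfl ?_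
  intro z hz
  obtain ⟨x, hx, _, hay, rfl⟩ := mem_sub.1 hz
  obtain ⟨y, hy, rfl⟩ := mem_smul_finset.1 hay
  rw [one_nsmul, two_nsmul, sub_smul, sub_sub_eq_add_sub]
  refine sub_mem_sub (add_mem_add ?_ ?_) ?_ <;>
    simp only [mem_union, hx, smul_mem_smul_finset hy, true_or, or_true]

end IsGoodDilate

lemma card_sq_le_card_image_mul {ι α : Type*} [DecidableEq α] (X : Finset ι) (f : ι → α) :
    (#X : ℝ) ^ 2 ≤ #(X.image f) * #{q ∈ X ×ˢ X | f q.1 = f q.2} := by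
  have fibers : (#{q ∈ X ×ˢ X | f q.1 = f q.2} : ℝ) =
      ∑ c ∈ X.image f, (#{x ∈ X | f x = c} : ℝ) ^ 2 := by
    rw [card_eq_sum_card_fiberwise (f := fun q => f q.1) (t := X.image f), Nat.cast_sum]
    · refine sum_congr rfl fun c _ => ?_
      rw [sq, ← Nat.cast_mul, ← card_product, ← filter_product (f · = c) (f · = c), filter_filter]
      congr 2
      exact filter_congr fun q _ =>
        ⟨fun h => ⟨h.2, h.1.symm.trans h.2⟩, fun h => ⟨h.1.trans h.2.symm, h.1⟩⟩
    · intro q hq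
      exact mem_image_of_mem _ (mem_product.1 (mem_filter.1 hq).1).1
  rw [fibers, card_eq_sum_card_image f X, Nat.cast_sum]
  exact sq_sum_le_card_mul_sum_sq

/-- The pairs of points of `P ×ˢ P` on which `(u, v) ↦ u - a * v` collides. Their number is the
additive energy of `P` and `a • P`. -/
def dilateCollisions (P : Finset F) (a : F) : Finset ((F × F) × (F × F)) :=
  {q ∈ (P ×ˢ P) ×ˢ (P ×ˢ P) | q.1.1 - a * q.1.2 = q.2.1 - a * q.2.2}

lemma IsGoodDilate.card_pow_three_le (hP : P.Nonempty) (ha : IsGoodDilate K P a) :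
    (#P : ℝ) ^ 3 ≤ K * #(dilateCollisions P a) := by
  have image_eq : (P ×ˢ P).image (fun q => q.1 - a * q.2) = P - a • P := by
    ext x
    simp only [mem_image, mem_product, mem_sub, mem_smul_finset, smul_eq_mul, Prod.exists]
    aesop
  refine le_of_mul_le_mul_left ?_ (Nat.cast_pos.2 hP.card_pos : (0 : ℝ) < #P)
  calc (#P : ℝ) * (#P : ℝ) ^ 3 = (#(P ×ˢ P) : ℝ) ^ 2 := by rw [card_product]; push_cast; ring
    _ ≤ (#(P - a • P) : ℝ) * #(dilateCollisions P a) := by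
      rw [← image_eq]
      exact card_sq_le_card_image_mul _ _
    _ ≤ K * #P * #(dilateCollisions P a) := by gcongr; exact ha
    _ = #P * (K * #(dilateCollisions P a)) := by ring

lemma sum_card_dilateCollisions_le (P R : Finset F) :
    ∑ a ∈ R, #(dilateCollisions P a) ≤ #P ^ 4 + #R * #P ^ 2 := by
  have trivial_collisions (a : F) : #{q ∈ dilateCollisions P a | q.1 = q.2} ≤ #P ^ 2 := by
    rw [sq, ← card_product, ← diag_card (P ×ˢ P)]
    refine card_le_card fun q hq => ?_
    simp only [dilateCollisions, mem_filter, mem_product] at hq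
    simp only [mem_diag, mem_product]
    exact ⟨hq.1.1.1, hq.2⟩
  have unique_dilate (q : (F × F) × (F × F)) :
      #{a ∈ R | q.1.1 - a * q.1.2 = q.2.1 - a * q.2.2 ∧ q.1 ≠ q.2} ≤ 1 := by
    obtain ⟨⟨u, v⟩, w, z⟩ := q
    refine card_le_one.2 fun a ha b hb => ?_
    simp only [mem_filter, ne_eq, Prod.mk.injEq] at ha hb
    have hvz : v ≠ z := by
      rintro rfl
      exact ha.2.2 ⟨sub_left_injective ha.2.1, rfl⟩
    apply mul_right_cancel₀ (sub_ne_zero.2 hvz)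
    linear_combination hb.2.1 - ha.2.1
  have nontrivial_collisions : ∑ a ∈ R, #{q ∈ dilateCollisions P a | q.1 ≠ q.2} ≤ #P ^ 4 := by
    simp only [dilateCollisions, filter_filter]
    refine (sum_card_bipartiteAbove_eq_sum_card_bipartiteBelow _).trans_le <|
      (sum_le_card_nsmul _ _ 1 fun q _ => unique_dilate q).trans_eq ?_
    simp only [card_product, smul_eq_mul]
    ring
  calc ∑ a ∈ R, #(dilateCollisions P a)
      = ∑ a ∈ R, #{q ∈ dilateCollisions P a | q.1 = q.2} +
        ∑ a ∈ R, #{q ∈ dilateCollisions P a | q.1 ≠ q.2} := by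
        rw [← sum_add_distrib]
        exact sum_congr rfl fun a _ => (card_filter_add_card_filter_not _).symm
    _ ≤ #R * #P ^ 2 + #P ^ 4 :=
        add_le_add (sum_le_card_nsmul _ _ _ fun a _ => trivial_collisions a) nontrivial_collisions
    _ = #P ^ 4 + #R * #P ^ 2 := add_comm _ _

lemma card_le_of_isGoodDilate {R : Finset F} (hK : 0 < K) (hP : 2 * K ≤ #P)
    (hR : ∀ a ∈ R, IsGoodDilate K P a) : (#R : ℝ) ≤ 2 * K * #P := by
  have hP₀ : (0 : ℝ) < #P := by linarith
  have lower : #R * (#P : ℝ) ^ 3 ≤ K * ∑ a ∈ R, (#(dilateCollisions P a) : ℝ) := by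
    rw [mul_sum, ← nsmul_eq_mul]
    exact card_nsmul_le_sum _ _ _ fun a ha =>
      (hR a ha).card_pow_three_le (card_pos.1 (Nat.cast_pos.1 hP₀))
  have upper : ∑ a ∈ R, (#(dilateCollisions P a) : ℝ) ≤ #P ^ 4 + #R * #P ^ 2 :=
    mod_cast sum_card_dilateCollisions_le P R
  have absorb : K * (#R * (#P : ℝ) ^ 2) ≤ #P / 2 * (#R * #P ^ 2) := by gcongr; linarith
  refine le_of_mul_le_mul_left ?_ (by positivity : (0 : ℝ) < #P ^ 3)
  have := lower.trans (mul_le_mul_of_nonneg_left upper hK.le)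
  linarith

end GoodDilates

section Pivot

lemma exists_mem_add_one_notMem {n : ℕ} [NeZero n] {S : Finset (ZMod n)} (h₀ : 0 ∈ S)
    (hS : ∃ x, x ∉ S) : ∃ x ∈ S, x + 1 ∉ S := by
  by_contra! hstep
  obtain ⟨x, hx⟩ := hS
  have natCast_mem (m : ℕ) : (m : ZMod n) ∈ S := by
    induction m with
    | zero => simpa using h₀
    | succ m ih => simpa using hstep _ ih
  exact hx (x.natCast_zmod_val ▸ natCast_mem x.val)

variable {p : ℕ} [Fact p.Prime] {P Q : Finset (ZMod p)} {K : ℝ}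

-- With `ξ` a quotient of differences of `Q` such that `ξ + 1` is not one, `(a, b) ↦ a + (ξ + 1) b`
-- is injective on `Q × Q`. The exponents grow as `1 → 4 → 8` for `ξ`, `32` for `ξ + 1`, `33` for
-- `(ξ + 1) b`, and `132` for the sum.
lemma exists_card_eq_sq_of_isGoodDilate (hK : 27 ≤ K) (h₁ : IsGoodDilate K P 1)
    (hQ : ∀ q ∈ Q, IsGoodDilate K P q) (hbad : ∃ a, ¬ IsGoodDilate (K ^ 132) P a) :
    ∃ Q' : Finset (ZMod p), #Q' = #Q ^ 2 ∧ ∀ q ∈ Q', IsGoodDilate (K ^ 132) P q := by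
  obtain rfl | hQ₀ := Q.eq_empty_or_nonempty
  · exact ⟨∅, rfl, by simp⟩
  have hK₁ : 1 ≤ K := by linarith
  have le_pow (n : ℕ) [NeZero n] : K ≤ K ^ n := le_self_pow₀ hK₁ (NeZero.ne n)
  have good_quot : ∀ ξ ∈ (Q - Q) / (Q - Q), IsGoodDilate (K ^ 8) P ξ := by
    have good_diff : ∀ d ∈ Q - Q, IsGoodDilate (K ^ 4) P d := by
      intro d hd
      obtain ⟨a, ha, b, hb, rfl⟩ := mem_sub.1 hd
      exact (hQ a ha).sub (hQ b hb) hK h₁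
    intro ξ hξ
    obtain ⟨d, hd, e, he, rfl⟩ := mem_div.1 hξ
    rw [div_eq_mul_inv, show K ^ 8 = K ^ 4 * K ^ 4 by ring]
    exact (good_diff d hd).mul (one_le_pow₀ hK₁) (one_le_pow₀ hK₁) (good_diff e he).inv
  obtain ⟨ξ, hξ, hξ₁⟩ : ∃ ξ ∈ (Q - Q) / (Q - Q), ξ + 1 ∉ (Q - Q) / (Q - Q) := by
    obtain ⟨a, ha⟩ := hbad
    refine exists_mem_add_one_notMem ?_ ⟨a, fun h =>
      ha ((good_quot a h).mono (pow_le_pow_right₀ hK₁ (by norm_num)))⟩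
    have zero_mem : (0 : ZMod p) ∈ Q - Q := by
      obtain ⟨b, hb⟩ := hQ₀
      exact mem_sub.2 ⟨b, hb, b, hb, sub_self b⟩
    exact mem_div.2 ⟨0, zero_mem, 0, zero_mem, div_zero 0⟩
  refine ⟨(Q ×ˢ Q).image fun e => e.1 + (ξ + 1) * e.2, ?_, ?_⟩
  · rw [card_image_of_injOn, card_product, sq]
    rintro ⟨a, b⟩ hab ⟨c, d⟩ hcd heq
    simp only [coe_product, Set.mem_prod, mem_coe] at hab hcd heq
    obtain rfl | hbd := eq_or_ne b d
    · rw [add_right_cancel heq]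
    · refine absurd (mem_div.2 ⟨c - a, sub_mem_sub hcd.1 hab.1, b - d,
        sub_mem_sub hab.2 hcd.2, ?_⟩) hξ₁
      rw [div_eq_iff (sub_ne_zero.2 hbd)]
      linear_combination -heq
  · intro q hq
    obtain ⟨⟨a, b⟩, hab, rfl⟩ := mem_image.1 hq
    rw [mem_product] at hab
    have good_succ : IsGoodDilate (K ^ 32) P (ξ + 1) := by
      rw [show K ^ 32 = (K ^ 8) ^ 4 by ring]
      exact (good_quot ξ hξ).add (h₁.mono (le_pow 8)) (hK.trans (le_pow 8)) (h₁.mono (le_pow 8))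
    have good_mul : IsGoodDilate (K ^ 33) P ((ξ + 1) * b) :=
      good_succ.mul (one_le_pow₀ hK₁) hK₁ (hQ b hab.2)
    rw [show K ^ 132 = (K ^ 33) ^ 4 by ring]
    exact ((hQ a hab.1).mono (le_pow 33)).add good_mul (hK.trans (le_pow 33)) (h₁.mono (le_pow 33))

lemma exists_card_eq_pow_of_isGoodDilate (hK : 27 ≤ K) (h₁ : IsGoodDilate K P 1)
    (hQ : ∀ q ∈ Q, IsGoodDilate K P q) (n : ℕ) (hbad : ∃ a, ¬ IsGoodDilate (K ^ 132 ^ n) P a) :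
    ∃ Q' : Finset (ZMod p), #Q' = #Q ^ 2 ^ n ∧ ∀ q ∈ Q', IsGoodDilate (K ^ 132 ^ n) P q := by
  have hK₁ : 1 ≤ K := by linarith
  induction n with
  | zero => exact ⟨Q, by simp, by simpa using hQ⟩
  | succ n ih =>
    have le_pow : K ≤ K ^ 132 ^ n := le_self_pow₀ hK₁ (by positivity)
    obtain ⟨a, ha⟩ := hbad
    obtain ⟨Q₁, hcard, hQ₁⟩ := ih ⟨a, fun h =>
      ha (h.mono (pow_le_pow_right₀ hK₁ (by gcongr <;> simp)))⟩
    obtain ⟨Q₂, hcard₂, hQ₂⟩ := exists_card_eq_sq_of_isGoodDilate (hK.trans le_pow)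
      (h₁.mono le_pow) hQ₁ ⟨a, by rwa [← pow_mul, ← pow_succ]⟩
    exact ⟨Q₂, by rw [hcard₂, hcard, ← pow_mul, ← pow_succ], by rwa [pow_succ, pow_mul]⟩

lemma card_pow_le_of_isGoodDilate (hK : 27 ≤ K) (h₁ : IsGoodDilate K P 1)
    (hQ : ∀ q ∈ Q, IsGoodDilate K P q) {n : ℕ} (hP : 2 * K ^ 132 ^ n ≤ #P)
    (hp : 2 * K ^ 132 ^ n * #P < p) : (#Q : ℝ) ^ 2 ^ n ≤ 2 * K ^ 132 ^ n * #P := by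
  have hK₀ : 0 < K ^ 132 ^ n := by positivity
  have hbad : ∃ a, ¬ IsGoodDilate (K ^ 132 ^ n) P a := by
    by_contra! hgood
    have := card_le_of_isGoodDilate (R := univ) hK₀ hP fun a _ => hgood a
    rw [card_univ, ZMod.card] at this
    exact this.not_gt hp
  obtain ⟨Q', hcard, hQ'⟩ := exists_card_eq_pow_of_isGoodDilate hK h₁ hQ n hbad
  rw [← Nat.cast_pow, ← hcard]
  exact card_le_of_isGoodDilate hK₀ hP hQ'

end Pivot

section PopularDifferences

variable {G : Type*} [AddCommGroup G] {B : Finset G} {s t : ℝ} {μ : G}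

lemma subPairCount_eq_card_filter [DecidableEq G] (μ : G) (S : Finset G) :
    subPairCount μ S = #{x ∈ S | x + μ ∈ S} := by
  rw [subPairCount, ← card_image_of_injective _ (f := fun x => (x + μ, x))
    fun x y h => (Prod.mk.inj h).2, ← Set.ncard_coe_finset]
  congr 1
  ext ⟨x, y⟩
  simp only [Set.mem_ofPred_eq, coe_image, coe_filter, Set.mem_image, Prod.mk.injEq,
    exists_eq_right_right, sub_eq_iff_eq_add']
  aesop

lemma subPairCount_le_card (μ : G) (S : Finset G) : subPairCount μ S ≤ #S := by
  classical
  exact (subPairCount_eq_card_filter μ S).trans_le (card_filter_le _ _)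

lemma card_filter_add_mem_add_mem_le [DecidableEq G] (B : Finset G) (a b : G) :
    #{x ∈ B | x + a ∈ B ∧ x + b ∈ B} ≤ subPairCount (a - b) B := by
  rw [subPairCount_eq_card_filter]
  refine card_le_card_of_injOn (· + b) (fun x hx => ?_) (add_left_injective b).injOn
  obtain ⟨-, ha, hb⟩ := mem_filter.1 hx
  exact mem_filter.2 ⟨hb, by rwa [add_assoc, add_sub_cancel]⟩

lemma mul_sq_le_sum_subPairCount_sub {ι : Type*} {I : Finset ι} {f : ι → G} {κ : ℝ}
    (hB : B.Nonempty) (hκ : 0 ≤ κ) (h : κ * (#B * #I) ≤ ∑ i ∈ I, (subPairCount (f i) B : ℝ)) :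
    κ ^ 2 * (#B * (#I : ℝ) ^ 2) ≤ ∑ i ∈ I, ∑ j ∈ I, (subPairCount (f i - f j) B : ℝ) := by
  classical
  simp only [subPairCount_eq_card_filter (f _)] at h
  refine le_of_mul_le_mul_left ?_ (Nat.cast_pos.2 hB.card_pos : (0 : ℝ) < #B)
  calc #B * (κ ^ 2 * (#B * (#I : ℝ) ^ 2)) = (κ * (#B * #I)) ^ 2 := by ring
    _ ≤ (∑ i ∈ I, (#{x ∈ B | x + f i ∈ B} : ℝ)) ^ 2 := by gcongr
    _ ≤ #B * ∑ i ∈ I, ∑ j ∈ I, (#{x ∈ B | x + f i ∈ B ∧ x + f j ∈ B} : ℝ) :=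
      sq_sum_card_filter_le I B fun i x => x + f i ∈ B
    _ ≤ #B * ∑ i ∈ I, ∑ j ∈ I, (subPairCount (f i - f j) B : ℝ) := by
      gcongr
      exact card_filter_add_mem_add_mem_le B _ _

variable [Fintype G]

lemma sum_subPairCount (B : Finset G) : ∑ μ, subPairCount μ B = #B ^ 2 := by
  classical
  simp only [subPairCount_eq_card_filter]
  refine (sum_card_bipartiteAbove_eq_sum_card_bipartiteBelow fun μ x => x + μ ∈ B).trans ?_
  rw [sq]
  refine sum_const_nat fun x _ => ?_
  rw [bipartiteBelow, ← card_map (Equiv.addLeft x).toEmbedding]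
  congr 1
  ext z
  simp only [mem_map_equiv, mem_filter, mem_univ, true_and, Equiv.addLeft_symm_apply]
  rw [add_neg_cancel_left]

/-- The `t`-popular differences of `B`: those with at least `t` representations. -/
noncomputable def popDiff (B : Finset G) (t : ℝ) : Finset G :=
  {μ | t ≤ subPairCount μ B}

lemma mem_popDiff : μ ∈ popDiff B t ↔ t ≤ subPairCount μ B := by simp [popDiff]

lemma popDiff_anti (h : s ≤ t) : popDiff B t ⊆ popDiff B s :=
  fun _ hμ => mem_popDiff.2 (h.trans (mem_popDiff.1 hμ))

lemma card_popDiff_mul_le (B : Finset G) (t : ℝ) : #(popDiff B t) * t ≤ (#B : ℝ) ^ 2 := by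
  calc #(popDiff B t) * t ≤ ∑ μ ∈ popDiff B t, (subPairCount μ B : ℝ) := by
        rw [← nsmul_eq_mul]
        exact card_nsmul_le_sum _ _ _ fun μ hμ => mem_popDiff.1 hμ
    _ ≤ ∑ μ, (subPairCount μ B : ℝ) :=
        sum_le_sum_of_subset_of_nonneg (subset_univ _) fun _ _ _ => Nat.cast_nonneg _
    _ = (#B : ℝ) ^ 2 := mod_cast sum_subPairCount B

lemma card_popDiff_div_le {y : ℝ} (hB : B.Nonempty) (hy : 0 < y) :
    #(popDiff B (#B / y)) ≤ #B * y := by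
  have := card_popDiff_mul_le B (#B / y)
  rw [mul_div_left_comm, sq] at this
  exact (div_le_iff₀ hy).1 (le_of_mul_le_mul_left this (Nat.cast_pos.2 hB.card_pos))

lemma exists_subset_popDiff_card_sub_le [DecidableEq G] {δ : ℝ} (hB : B.Nonempty) (hδ : 0 < δ)
    (hne : (popDiff B (δ * #B)).Nonempty) :
    ∃ P ⊆ popDiff B (δ * #B), δ ^ 2 / 8 * #(popDiff B (δ * #B)) ≤ #P ∧
      #(P - P) * ((δ ^ 2 / 2) ^ 5 * (#(popDiff B (δ * #B)) : ℝ) ^ 3) ≤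
        1024 * (#(popDiff B (δ ^ 2 / 2 * #B)) : ℝ) ^ 4 := by
  set P₀ := popDiff B (δ * #B)
  have correlation := mul_sq_le_sum_subPairCount_sub (I := P₀) (f := id) hB hδ.le <| by
    have := card_nsmul_le_sum P₀ (fun μ => (subPairCount μ B : ℝ)) _ fun μ hμ => mem_popDiff.1 hμ
    rw [nsmul_eq_mul] at this
    simp only [id]
    linarith
  have popular := half_mul_card_le_card_filter (X := P₀ ×ˢ P₀) (M := (#B : ℝ)) (η := δ ^ 2)
    (f := fun q => (subPairCount (q.1 - q.2) B : ℝ)) (Nat.cast_pos.2 hB.card_pos)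
    (fun q _ => mod_cast subPairCount_le_card _ B) <| by
      rw [sum_product, card_product, Nat.cast_mul, ← sq]
      exact correlation
  obtain ⟨S, hS, hcard, hdiff⟩ := exists_subset_card_sub_le (P := P₀)
    (Z := popDiff B (δ ^ 2 / 2 * #B)) (η := δ ^ 2 / 2) hne (by positivity) <| by
      rw [card_product, Nat.cast_mul, ← sq] at popular
      refine popular.trans_eq ?_
      simp only [← mem_popDiff, ← Nat.cast_sum]
      rw [card_filter, sum_product_right]
      simp only [card_filter]
  exact ⟨S, hS, by linarith, hdiff⟩

end PopularDifferences

section PopularRatios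

variable {F : Type*} [Field F] [DecidableEq F] {B D P Q : Finset F} {t δ τ : ℝ} {q : F}

lemma card_filter_mul_add_mem (hq : q ≠ 0) (B : Finset F) (b : F) :
    #{x ∈ B | q * x + b ∈ B} = #{w ∈ B | q⁻¹ * (w - b) ∈ B} := by
  refine card_nbij' (fun x => q * x + b) (fun w => q⁻¹ * (w - b)) ?_ ?_ ?_ ?_ <;> intro x hx
  · simp_all
  · simp_all
  · simp [inv_mul_cancel_left₀ hq]
  · simp [mul_inv_cancel_left₀ hq]

lemma card_filter_inv_mul_sub_mem_le (hq : q ≠ 0) (B : Finset F) (a b : F) :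
    #{w ∈ B | q⁻¹ * (w - a) ∈ B ∧ q⁻¹ * (w - b) ∈ B} ≤ subPairCount (q⁻¹ * (a - b)) B := by
  rw [subPairCount_eq_card_filter]
  refine card_le_card_of_injOn (fun w => q⁻¹ * (w - a)) (fun w hw => ?_)
    ((mul_right_injective₀ (inv_ne_zero hq)).comp sub_left_injective).injOn
  obtain ⟨-, ha, hb⟩ := mem_filter.1 hw
  exact mem_filter.2 ⟨ha, by rwa [← mul_add, sub_add_sub_cancel]⟩

lemma exists_subset_forall_le_card_filter_add_mem [Fintype F] (hP : P.Nonempty)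
    (hPB : P ⊆ popDiff B (δ * #B)) :
    ∃ D ⊆ B, δ / 2 * #B ≤ #D ∧ ∀ x ∈ D, δ / 2 * #P ≤ #{b ∈ P | x + b ∈ B} := by
  refine ⟨{x ∈ B | δ / 2 * #P ≤ #{b ∈ P | x + b ∈ B}}, filter_subset _ _, ?_,
    fun x hx => (mem_filter.1 hx).2⟩
  refine half_mul_card_le_card_filter (Nat.cast_pos.2 hP.card_pos)
    (fun x _ => mod_cast card_filter_le _ _) ?_
  rw [← sum_card_filter_comm P B fun b x => x + b ∈ B]
  have := card_nsmul_le_sum P (fun μ => (subPairCount μ B : ℝ)) _ fun μ hμ => mem_popDiff.1 (hPB hμ)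
  simp only [subPairCount_eq_card_filter, nsmul_eq_mul] at this
  linarith

lemma mul_sq_le_sum_subPairCount_inv_mul (hB : B.Nonempty) (hτ : 0 ≤ τ) (hδ : 0 ≤ δ) (hDB : D ⊆ B)
    (hD : ∀ x ∈ D, δ * #P ≤ #{b ∈ P | x + b ∈ B}) (hq : q ≠ 0)
    (hqD : τ * #B ≤ #{x ∈ D | q * x ∈ D}) :
    (τ * δ) ^ 2 * (#B * (#P : ℝ) ^ 2) ≤
      ∑ b ∈ P ×ˢ P, (subPairCount (q⁻¹ * (b.1 - b.2)) B : ℝ) := by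
  have lower : τ * #B * (δ * #P) ≤ ∑ b ∈ P, (#{w ∈ B | q⁻¹ * (w - b) ∈ B} : ℝ) := by
    calc τ * #B * (δ * #P) ≤ #{x ∈ D | q * x ∈ D} * (δ * #P) := by gcongr
      _ ≤ ∑ x ∈ D with q * x ∈ D, (#{b ∈ P | q * x + b ∈ B} : ℝ) := by
        rw [← nsmul_eq_mul]
        exact card_nsmul_le_sum _ _ _ fun x hx => hD _ (mem_filter.1 hx).2
      _ ≤ ∑ x ∈ B, (#{b ∈ P | q * x + b ∈ B} : ℝ) :=
        sum_le_sum_of_subset_of_nonneg ((filter_subset _ _).trans hDB) fun _ _ _ =>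
          Nat.cast_nonneg _
      _ = ∑ b ∈ P, (#{w ∈ B | q⁻¹ * (w - b) ∈ B} : ℝ) := by
        rw [← sum_card_filter_comm P B fun b x => q * x + b ∈ B]
        exact sum_congr rfl fun b _ => by rw [card_filter_mul_add_mem hq]
  refine le_of_mul_le_mul_left ?_ (Nat.cast_pos.2 hB.card_pos : (0 : ℝ) < #B)
  calc #B * ((τ * δ) ^ 2 * (#B * (#P : ℝ) ^ 2)) = (τ * #B * (δ * #P)) ^ 2 := by ring
    _ ≤ (∑ b ∈ P, (#{w ∈ B | q⁻¹ * (w - b) ∈ B} : ℝ)) ^ 2 := by gcongr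
    _ ≤ #B * ∑ a ∈ P, ∑ b ∈ P, (#{w ∈ B | q⁻¹ * (w - a) ∈ B ∧ q⁻¹ * (w - b) ∈ B} : ℝ) :=
      sq_sum_card_filter_le P B fun b w => q⁻¹ * (w - b) ∈ B
    _ ≤ #B * ∑ b ∈ P ×ˢ P, (subPairCount (q⁻¹ * (b.1 - b.2)) B : ℝ) := by
      rw [sum_product]
      gcongr
      exact card_filter_inv_mul_sub_mem_le hq B _ _

/-- The `t`-popular ratios of `D`: those `q` for which at least `t` elements of `D` are mapped
into `D` by multiplication by `q`. -/
noncomputable def popRatio [Fintype F] (D : Finset F) (t : ℝ) : Finset F :=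
  {q | t ≤ #{x ∈ D | q * x ∈ D}}

lemma mem_popRatio [Fintype F] : q ∈ popRatio D t ↔ t ≤ #{x ∈ D | q * x ∈ D} := by simp [popRatio]

lemma popRatio_anti [Fintype F] {s : ℝ} (h : s ≤ t) : popRatio D t ⊆ popRatio D s :=
  fun _ hq => mem_popRatio.2 (h.trans (mem_popRatio.1 hq))

lemma ne_zero_of_mem_popRatio [Fintype F] (hD : 0 ∉ D) (ht : 0 < t) (hq : q ∈ popRatio D t) :
    q ≠ 0 := by
  rintro rfl
  have := mem_popRatio.1 hq
  simp only [zero_mul, hD, filter_false, card_empty, Nat.cast_zero] at this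
  exact ht.not_ge this

end PopularRatios

section DilatesFromRatios

variable {F : Type*} [Field F] {B P P₁ Q Z : Finset F} {L η θ κ σ : ℝ} {q q' ξ : F}

-- The hypothesis makes `B` correlate with the differences of the family `(q, b) ↦ (b.1 - b.2) / q`.
lemma exists_mem_mul_le_sum_subPairCount (hB : B.Nonempty) (hQ : Q.Nonempty) (hκ : 0 ≤ κ)
    (hcorr : ∀ q ∈ Q, κ * (#B * (#P : ℝ) ^ 2) ≤
      ∑ b ∈ P ×ˢ P, (subPairCount (q⁻¹ * (b.1 - b.2)) B : ℝ)) :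
    ∃ q ∈ Q, κ ^ 2 * (#B * (#P : ℝ) ^ 4 * #Q) ≤ ∑ q' ∈ Q, ∑ w ∈ (P ×ˢ P) ×ˢ (P ×ˢ P),
      (subPairCount (q⁻¹ * (w.1.1 - w.1.2) - q'⁻¹ * (w.2.1 - w.2.2)) B : ℝ) := by
  have correlation := mul_sq_le_sum_subPairCount_sub (I := Q ×ˢ (P ×ˢ P))
    (f := fun i => i.1⁻¹ * (i.2.1 - i.2.2)) hB hκ <| by
      rw [sum_product]
      refine le_trans (le_of_eq ?_) (card_nsmul_le_sum _ _ _ hcorr)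
      rw [card_product, card_product, nsmul_eq_mul]
      push_cast
      ring
  have sum_eq : ∑ i ∈ Q ×ˢ (P ×ˢ P), ∑ j ∈ Q ×ˢ (P ×ˢ P),
      (subPairCount (i.1⁻¹ * (i.2.1 - i.2.2) - j.1⁻¹ * (j.2.1 - j.2.2)) B : ℝ) =
      ∑ q ∈ Q, ∑ q' ∈ Q, ∑ w ∈ (P ×ˢ P) ×ˢ (P ×ˢ P),
        (subPairCount (q⁻¹ * (w.1.1 - w.1.2) - q'⁻¹ * (w.2.1 - w.2.2)) B : ℝ) := by
    rw [sum_product]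
    refine sum_congr rfl fun q _ => ?_
    simp only [sum_product Q (P ×ˢ P), sum_product (P ×ˢ P) (P ×ˢ P)]
    exact sum_comm
  refine exists_le_of_sum_le hQ ?_
  rw [← sum_eq]
  refine le_trans (le_of_eq ?_) correlation
  rw [sum_const, nsmul_eq_mul, card_product, card_product]
  push_cast
  ring

variable [DecidableEq F]

lemma IsGoodDilate.of_subset_smul_add_singleton (hη : 0 < η) (hσ : #(P - P) ≤ σ * #P)
    (hP₁ : P₁ ⊆ P) (t : F) (hP₁' : P₁ ⊆ ξ • P + {t}) (hcard : η * #P ≤ #P₁) :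
    IsGoodDilate (σ ^ 2 / η) P ξ := by
  obtain rfl | hP := P.eq_empty_or_nonempty
  · exact .empty _ _
  have left : (#(P - P₁) : ℝ) ≤ σ * #P :=
    (Nat.cast_le.2 (card_le_card (sub_subset_sub_left hP₁))).trans hσ
  have right : (#(ξ • P - P₁) : ℝ) ≤ σ * #P := by
    refine le_trans ?_ hσ
    calc (#(ξ • P - P₁) : ℝ) ≤ #(ξ • P - (ξ • P + {t})) :=
          Nat.cast_le.2 (card_le_card (sub_subset_sub_left hP₁'))
      _ = #(ξ • (P - P)) := by
          rw [smul_finset_sub, ← sub_sub, sub_singleton,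
            card_image_of_injective _ sub_left_injective]
      _ ≤ #(P - P) := Nat.cast_le.2 card_image_le
  have triangle : (#(P - ξ • P) : ℝ) * #P₁ ≤ #(P - P₁) * #(ξ • P - P₁) :=
    mod_cast ruzsa_triangle_inequality_sub_sub_sub P P₁ (ξ • P)
  rw [IsGoodDilate, div_mul_eq_mul_div, le_div_iff₀ hη]
  refine le_of_mul_le_mul_right ?_ (Nat.cast_pos.2 hP.card_pos : (0 : ℝ) < #P)
  calc (#(P - ξ • P) : ℝ) * η * #P = #(P - ξ • P) * (η * #P) := by ring
    _ ≤ #(P - ξ • P) * #P₁ := by gcongr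
    _ ≤ #(P - P₁) * #(ξ • P - P₁) := triangle
    _ ≤ σ * #P * (σ * #P) := by gcongr; exact (Nat.cast_nonneg _).trans left
    _ = σ ^ 2 * #P * #P := by ring

/-- The quadruples `((a, b), (c, d))` of points of `P` with `(a - b) / q - (c - d) / q'` in `Z`. -/
def ratioQuadruples (P Z : Finset F) (q q' : F) : Finset ((F × F) × (F × F)) :=
  {w ∈ (P ×ˢ P) ×ˢ (P ×ˢ P) | q⁻¹ * (w.1.1 - w.1.2) - q'⁻¹ * (w.2.1 - w.2.2) ∈ Z}

-- Fixing `b`, `d` and the value `z` of `(a - b) / q - (c - d) / q'` makes `a` an affine function of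
-- `c` with slope `q / q'`.
lemma card_filter_ratioQuadruples_le (hq : q ≠ 0) (hq' : q' ≠ 0) (P Z : Finset F) (b d z : F) :
    #{w ∈ ratioQuadruples P Z q q' |
      (w.1.2, w.2.2, q⁻¹ * (w.1.1 - w.1.2) - q'⁻¹ * (w.2.1 - w.2.2)) = (b, d, z)} ≤
        #{x ∈ P | x ∈ (q / q') • P + {b + q * z - q / q' * d}} := by
  have affine : ∀ w ∈ {w ∈ ratioQuadruples P Z q q' |
      (w.1.2, w.2.2, q⁻¹ * (w.1.1 - w.1.2) - q'⁻¹ * (w.2.1 - w.2.2)) = (b, d, z)},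
      w.1.1 ∈ P ∧ w.2.1 ∈ P ∧ w.1.2 = b ∧ w.2.2 = d ∧
        w.1.1 = q / q' * w.2.1 + (b + q * z - q / q' * d) := by
    rintro ⟨⟨a, _⟩, c, _⟩ hw
    simp only [ratioQuadruples, mem_filter, mem_product, Prod.mk.injEq] at hw
    obtain ⟨hw, rfl, rfl, rfl⟩ := hw
    refine ⟨hw.1.1.1, hw.1.2.1, rfl, rfl, ?_⟩
    field_simp
    ring
  refine card_le_card_of_injOn (fun w => w.1.1) ?_ ?_
  · intro w hw
    obtain ⟨ha, hc, -, -, hac⟩ := affine w hw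
    exact mem_filter.2
      ⟨ha, mem_add.2 ⟨_, smul_mem_smul_finset hc, _, mem_singleton_self _, hac.symm⟩⟩
  · intro w hw w' hw' heq
    obtain ⟨-, -, hb, hd, hac⟩ := affine w hw
    obtain ⟨-, -, hb', hd', hac'⟩ := affine w' hw'
    have hcc' := mul_left_cancel₀ (div_ne_zero hq hq')
      (add_right_cancel (hac.symm.trans (heq.trans hac')))
    exact Prod.ext (Prod.ext heq (hb.trans hb'.symm)) (Prod.ext hcc' (hd.trans hd'.symm))

lemma exists_le_card_filter_mem_smul_add_singleton (hq : q ≠ 0) (hq' : q' ≠ 0) (hP : P.Nonempty)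
    (hL : 0 < L) (hθ : 0 < θ) (hZ : #Z ≤ L * #P)
    (hW : θ * (#P : ℝ) ^ 4 ≤ #(ratioQuadruples P Z q q')) :
    ∃ t, θ / L * #P ≤ #{x ∈ P | x ∈ (q / q') • P + {t}} := by
  have : (0 : ℝ) < #P := Nat.cast_pos.2 hP.card_pos
  let key (w : (F × F) × (F × F)) : F × F × F :=
    (w.1.2, w.2.2, q⁻¹ * (w.1.1 - w.1.2) - q'⁻¹ * (w.2.1 - w.2.2))
  have mapsTo : ∀ w ∈ ratioQuadruples P Z q q', key w ∈ P ×ˢ P ×ˢ Z := by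
    intro w hw
    simp only [ratioQuadruples, mem_filter, mem_product] at hw
    simp only [key, mem_product]
    tauto
  have hne : (P ×ˢ P ×ˢ Z).Nonempty := by
    have quadruples : (ratioQuadruples P Z q q').Nonempty :=
      card_pos.1 (Nat.cast_pos.1 ((by positivity : (0 : ℝ) < θ * #P ^ 4).trans_le hW))
    exact ⟨_, mapsTo _ quadruples.choose_spec⟩
  obtain ⟨⟨b, d, z⟩, -, hfiber⟩ := exists_le_card_fiber_of_nsmul_le_card_of_maps_to
    (b := θ / L * #P) mapsTo hne <| by
      calc #(P ×ˢ P ×ˢ Z) • (θ / L * #P) = #P * (#P * #Z) * (θ / L * #P) := by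
            rw [nsmul_eq_mul, card_product, card_product, Nat.cast_mul, Nat.cast_mul]
        _ ≤ #P * (#P * (L * #P)) * (θ / L * #P) := by gcongr
        _ = θ * (#P : ℝ) ^ 4 := by field_simp
        _ ≤ #(ratioQuadruples P Z q q') := hW
  exact ⟨_, hfiber.trans (Nat.cast_le.2 (card_filter_ratioQuadruples_le hq hq' P Z b d z))⟩

lemma isGoodDilate_div (hq : q ≠ 0) (hq' : q' ≠ 0) (hP : P.Nonempty)
    (hL : 0 < L) (hθ : 0 < θ) (hZ : #Z ≤ L * #P) (hσ : #(P - P) ≤ σ * #P)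
    (hW : θ * (#P : ℝ) ^ 4 ≤ #(ratioQuadruples P Z q q')) :
    IsGoodDilate (σ ^ 2 * L / θ) P (q / q') := by
  obtain ⟨t, ht⟩ := exists_le_card_filter_mem_smul_add_singleton hq hq' hP hL hθ hZ hW
  rw [← div_div_eq_mul_div]
  exact .of_subset_smul_add_singleton (div_pos hθ hL) hσ (filter_subset _ _) t
    (fun x hx => (mem_filter.1 hx).2) ht

variable [Fintype F]

lemma exists_subset_le_card_ratioQuadruples (hB : B.Nonempty) (hP : P.Nonempty) (hQ : Q.Nonempty)
    (hκ : 0 ≤ κ) (hcorr : ∀ q ∈ Q, κ * (#B * (#P : ℝ) ^ 2) ≤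
      ∑ b ∈ P ×ˢ P, (subPairCount (q⁻¹ * (b.1 - b.2)) B : ℝ)) :
    ∃ q ∈ Q, ∃ Q' ⊆ Q, κ ^ 2 / 2 * #Q ≤ #Q' ∧ ∀ q' ∈ Q', κ ^ 2 / 4 * (#P : ℝ) ^ 4 ≤
      #(ratioQuadruples P (popDiff B (κ ^ 2 / 4 * #B)) q q') := by
  have hB₀ : (0 : ℝ) < #B := Nat.cast_pos.2 hB.card_pos
  have : (0 : ℝ) < #P := Nat.cast_pos.2 hP.card_pos
  have card_pairs : (#((P ×ˢ P) ×ˢ (P ×ˢ P)) : ℝ) = (#P : ℝ) ^ 4 := by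
    rw [card_product, card_product]
    push_cast
    ring
  obtain ⟨q, hq, hsum⟩ := exists_mem_mul_le_sum_subPairCount hB hQ hκ hcorr
  set S : F → ℝ := fun q' => ∑ w ∈ (P ×ˢ P) ×ˢ (P ×ˢ P),
    (subPairCount (q⁻¹ * (w.1.1 - w.1.2) - q'⁻¹ * (w.2.1 - w.2.2)) B : ℝ)
  refine ⟨q, hq, {q' ∈ Q | κ ^ 2 / 2 * (#B * (#P : ℝ) ^ 4) ≤ S q'}, filter_subset _ _,
    half_mul_card_le_card_filter (by positivity) (fun q' _ => ?_) hsum, fun q' hq' => ?_⟩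
  · rw [← card_pairs, mul_comm, ← nsmul_eq_mul]
    exact sum_le_card_nsmul _ _ _ fun w _ => mod_cast subPairCount_le_card _ B
  · have popular := half_mul_card_le_card_filter (η := κ ^ 2 / 2) hB₀
      (fun w _ => Nat.cast_le.2 (subPairCount_le_card _ B)) <| by
        rw [card_pairs]
        exact (mem_filter.1 hq').2
    rw [card_pairs, div_div, show (2 * 2 : ℝ) = 4 by norm_num] at popular
    simpa only [ratioQuadruples, mem_popDiff] using popular

lemma exists_card_ge_forall_isGoodDilate (hB : B.Nonempty) (hP : P.Nonempty) (hQ : Q.Nonempty)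
    (hQ₀ : ∀ q ∈ Q, q ≠ 0) (hκ : 0 < κ) (hL : 0 < L)
    (hcorr : ∀ q ∈ Q, κ * (#B * (#P : ℝ) ^ 2) ≤
      ∑ b ∈ P ×ˢ P, (subPairCount (q⁻¹ * (b.1 - b.2)) B : ℝ))
    (hpop : #(popDiff B (κ ^ 2 / 4 * #B)) ≤ L * #P) (hσ : #(P - P) ≤ σ * #P) :
    ∃ Ξ : Finset F, κ ^ 2 / 2 * #Q ≤ #Ξ ∧
      ∀ ξ ∈ Ξ, IsGoodDilate (σ ^ 2 * L / (κ ^ 2 / 4)) P ξ := by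
  obtain ⟨q, hq, Q', hQ', hcard, hquad⟩ :=
    exists_subset_le_card_ratioQuadruples hB hP hQ hκ.le hcorr
  refine ⟨Q'.image (q / ·), ?_, ?_⟩
  · rwa [card_image_of_injective _ fun a b hab =>
      inv_injective (mul_right_injective₀ (hQ₀ q hq) (by simpa only [div_eq_mul_inv] using hab))]
  · intro ξ hξ
    obtain ⟨q', hq', rfl⟩ := mem_image.1 hξ
    exact isGoodDilate_div (hQ₀ q hq) (hQ₀ q' (hQ' hq')) hP hL (by positivity) hpop hσ
      (hquad q' hq')

end DilatesFromRatios

section SumProduct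

variable {F : Type*} [Field F] [DecidableEq F] [Fintype F] {B P : Finset F} {y T : ℝ}

lemma exists_subset_popDiff_card_sub_le_pow (hB : B.Nonempty) (hy : 2 ≤ y) (hyT : y ^ 322 ≤ T)
    (hne : (popDiff B (#B / y)).Nonempty)
    (hstep : #(popDiff B (#B / y ^ 322)) ≤ T * #(popDiff B (#B / y))) :
    ∃ P ⊆ popDiff B (#B / y), #(popDiff B (#B / y)) ≤ T * #P ∧ #(P - P) ≤ T ^ 5 * #P := by
  have hy₀ : 0 < y := by linarith
  have hβ : 2 * y ^ 2 ≤ y ^ 3 := by rw [pow_succ' y 2]; gcongr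
  have pow_le {k : ℕ} (hk : k ≤ 322) : y ^ k ≤ T :=
    (pow_le_pow_right₀ (by linarith) hk).trans hyT
  have hT : 0 < T := (pow_pos hy₀ 322).trans_le hyT
  rw [div_eq_inv_mul _ y] at hne hstep ⊢
  obtain ⟨P, hP, hcard, hdiff⟩ := exists_subset_popDiff_card_sub_le hB (inv_pos.2 hy₀) hne
  set n := (#(popDiff B (y⁻¹ * #B)) : ℝ)
  have hn : 0 < n := Nat.cast_pos.2 hne.card_pos
  have hnP : n ≤ 8 * y ^ 2 * #P := by
    rw [inv_pow, inv_div_left, inv_mul_le_iff₀ (by positivity)] at hcard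
    linarith
  have hZ : (#(popDiff B (y⁻¹ ^ 2 / 2 * #B)) : ℝ) ≤ T * n := by
    refine (Nat.cast_le.2 (card_le_card (popDiff_anti ?_))).trans hstep
    rw [div_eq_inv_mul, inv_pow, inv_div_left]
    gcongr
    exact hβ.trans (pow_le_pow_right₀ (by linarith) (by norm_num))
  refine ⟨P, hP, hnP.trans ?_, ?_⟩
  · gcongr
    calc 8 * y ^ 2 = 2 ^ 3 * y ^ 2 := by norm_num
      _ ≤ y ^ 3 * y ^ 2 := by gcongr
      _ ≤ T := by rw [← pow_add]; exact pow_le (by norm_num)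
  refine le_of_mul_le_mul_right ?_ (by positivity : 0 < (y⁻¹ ^ 2 / 2) ^ 5 * n ^ 3)
  calc #(P - P) * ((y⁻¹ ^ 2 / 2) ^ 5 * n ^ 3) ≤ 1024 * (T * n) ^ 4 := hdiff.trans (by gcongr)
    _ = 1024 * T ^ 4 * n ^ 3 * n := by ring
    _ ≤ 1024 * T ^ 4 * n ^ 3 * (8 * y ^ 2 * #P) := by gcongr
    _ = (8192 * 32 * y ^ 12) * T ^ 4 * #P * ((y⁻¹ ^ 2 / 2) ^ 5 * n ^ 3) := by
      field_simp
      ring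
    _ ≤ T * T ^ 4 * #P * ((y⁻¹ ^ 2 / 2) ^ 5 * n ^ 3) := by
      gcongr
      calc 8192 * 32 * y ^ 12 = 2 ^ 18 * y ^ 12 := by norm_num
        _ ≤ y ^ 18 * y ^ 12 := by gcongr
        _ ≤ T := by rw [← pow_add]; exact pow_le (by norm_num)
    _ = T ^ 5 * #P * ((y⁻¹ ^ 2 / 2) ^ 5 * n ^ 3) := by ring

lemma exists_isGoodDilate_of_popRatio {M : ℝ} (hB : B.Nonempty) (hB₀ : 0 ∉ B) (hy : 2 ≤ y)
    (hyT : y ^ 322 ≤ T) (hP : P.Nonempty) (hPB : P ⊆ popDiff B (#B / y))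
    (hpop : #(popDiff B (#B / y ^ 322)) ≤ T ^ 2 * #P) (hσ : #(P - P) ≤ T ^ 5 * #P) (hM : 0 < M)
    (hratio : ∀ D ⊆ B, #B / y ^ 2 ≤ #D → M ≤ #(popRatio D (#B / y ^ 78))) :
    ∃ Ξ : Finset F, M ≤ T * #Ξ ∧ ∀ ξ ∈ Ξ, IsGoodDilate (T ^ 13) P ξ := by
  have hy₀ : 0 < y := by linarith
  have hT : 0 < T := (pow_pos hy₀ 322).trans_le hyT
  have hB₁ : (0 : ℝ) < #B := Nat.cast_pos.2 hB.card_pos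
  rw [div_eq_inv_mul] at hPB
  obtain ⟨D, hDB, hDcard, hD⟩ := exists_subset_forall_le_card_filter_add_mem hP hPB
  have hQcard := hratio D hDB <| hDcard.trans' <| by
    rw [div_eq_inv_mul, div_eq_inv_mul, ← mul_inv, sq]
    gcongr
  set Q := popRatio D (#B / y ^ 78)
  have hQ : Q.Nonempty := card_pos.1 (Nat.cast_pos.1 (hM.trans_le hQcard))
  have hQ₀ : ∀ q ∈ Q, q ≠ 0 := fun q hq =>
    ne_zero_of_mem_popRatio (fun h => hB₀ (hDB h)) (by positivity) hq
  set κ := ((y ^ 78)⁻¹ * (y⁻¹ / 2)) ^ 2 with hκ_def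
  have hκ : 0 < κ := by positivity
  have hκy : (y ^ 322)⁻¹ ≤ κ ^ 2 / 4 := by
    rw [show κ ^ 2 / 4 = (2 ^ 6 * y ^ 316)⁻¹ by rw [hκ_def]; field_simp; norm_num,
      show y ^ 322 = y ^ 6 * y ^ 316 by ring]
    gcongr
  have hκT : T⁻¹ ≤ κ ^ 2 / 4 := hκy.trans' (by gcongr)
  obtain ⟨Ξ, hΞ, hgood⟩ := exists_card_ge_forall_isGoodDilate (L := T ^ 2) hB hP hQ hQ₀ hκ
    (by positivity)
    (fun q hq => mul_sq_le_sum_subPairCount_inv_mul hB (by positivity) (by positivity) hDB hD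
      (hQ₀ q hq) (by simpa only [div_eq_inv_mul] using mem_popRatio.1 hq))
    (hpop.trans' <| Nat.cast_le.2 <| card_le_card <| popDiff_anti <| by
      rw [div_eq_inv_mul]
      exact mul_le_mul_of_nonneg_right hκy hB₁.le) hσ
  refine ⟨Ξ, hQcard.trans ?_, fun ξ hξ => (hgood ξ hξ).mono ?_⟩
  · rw [← inv_mul_le_iff₀ hT]
    exact hΞ.trans' (by gcongr; linarith [pow_pos hκ 2])
  · rw [div_le_iff₀ (by positivity)]
    calc (T ^ 5) ^ 2 * T ^ 2 = T ^ 13 * T⁻¹ := by field_simp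
      _ ≤ T ^ 13 * (κ ^ 2 / 4) := by gcongr

lemma card_pow_four_le_of_isGoodDilate {p : ℕ} [Fact p.Prime] {P Ξ : Finset (ZMod p)} {e : ℕ}
    (he : 13 * 132 ^ 2 ≤ e) (hT : 2 ≤ T) (hP : #(P - P) ≤ T ^ 13 * #P)
    (hΞ : ∀ ξ ∈ Ξ, IsGoodDilate (T ^ 13) P ξ) (hlower : T ^ (e + 1) ≤ #P)
    (hp : T ^ (e + 1) * #P < p) : (#Ξ : ℝ) ^ 4 ≤ T ^ (e + 1) * #P := by
  have hT₁ : 1 ≤ T := by linarith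
  have one_good : IsGoodDilate (T ^ 13) P 1 := by rwa [IsGoodDilate, one_smul]
  have hK : 2 * (T ^ 13) ^ 132 ^ 2 ≤ T ^ (e + 1) := by
    rw [← pow_mul, pow_succ' T e]
    exact mul_le_mul hT (pow_le_pow_right₀ hT₁ he) (by positivity) (by positivity)
  have hKP : 2 * (T ^ 13) ^ 132 ^ 2 * #P ≤ T ^ (e + 1) * #P := by gcongr
  exact (card_pow_le_of_isGoodDilate (n := 2)
    ((pow_le_pow_left₀ zero_le_two hT 13).trans' (by norm_num)) one_good hΞ
    (hK.trans hlower) (hKP.trans_lt hp)).trans hKP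

-- The popular differences contain a set `P` of small doubling with many good dilates. The popular
-- ratios supply `T ^ (r - 2)` of them, and two pivots raise this number to the fourth power.
lemma false_of_card_popDiff_of_card_popRatio {p : ℕ} [Fact p.Prime] {B : Finset (ZMod p)}
    {e r : ℕ} (he : 13 * 132 ^ 2 ≤ e) (hr : e + 11 ≤ r) (hy : 2 ≤ y) (hyT : y ^ 322 ≤ T)
    (hB₀ : 0 ∉ B) (hB : #B = T ^ (3 * r)) (hp : T ^ (3 * r + e + 2) < p)
    (hdiff : T ^ r ≤ #(popDiff B (#B / y)))
    (hstep : #(popDiff B (#B / y ^ 322)) ≤ T * #(popDiff B (#B / y)))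
    (hratio : ∀ D ⊆ B, #B / y ^ 2 ≤ #D → T ^ (r - 1) ≤ #(popRatio D (#B / y ^ 78))) : False := by
  obtain ⟨s, rfl⟩ := Nat.exists_eq_add_of_le' ((Nat.le_add_left 2 _).trans hr)
  have hy₀ : 0 < y := by linarith
  have hyT' {k : ℕ} (hk : k ≤ 322) : y ^ k ≤ T :=
    (pow_le_pow_right₀ (by linarith) hk).trans hyT
  have hT : 2 ^ 5 ≤ T := (hyT' (k := 5) (by norm_num)).trans' (by gcongr)
  have hT₁ : 1 ≤ T := by linarith
  have hBcard : (0 : ℝ) < #B := by rw [hB]; positivity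
  have hBne : B.Nonempty := card_pos.1 (Nat.cast_pos.1 hBcard)
  have hne : (popDiff B (#B / y)).Nonempty :=
    card_pos.1 (Nat.cast_pos.1 ((by positivity : 0 < T ^ (s + 2)).trans_le hdiff))
  obtain ⟨P, hPB, hPcard, hP⟩ := exists_subset_popDiff_card_sub_le_pow hBne hy hyT hne hstep
  have hP_lower : T ^ (s + 1) ≤ #P := by
    refine le_of_mul_le_mul_left (hPcard.trans' (hdiff.trans_eq' ?_)) (by positivity)
    ring
  have hP_upper : #P ≤ T ^ (3 * (s + 2) + 1) := by
    calc (#P : ℝ) ≤ #(popDiff B (#B / y)) := Nat.cast_le.2 (card_le_card hPB)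
      _ ≤ #B * y := card_popDiff_div_le hBne hy₀
      _ ≤ T ^ (3 * (s + 2)) * T := by rw [hB]; gcongr; simpa using hyT' (k := 1) (by norm_num)
      _ = T ^ (3 * (s + 2) + 1) := by ring
  obtain ⟨Ξ, hΞcard, hΞ⟩ := exists_isGoodDilate_of_popRatio hBne hB₀ hy hyT
    (card_pos.1 (Nat.cast_pos.1 ((by positivity : 0 < T ^ (s + 1)).trans_le hP_lower))) hPB
    (hstep.trans (by rw [sq, mul_assoc]; gcongr)) hP (by positivity) hratio
  have hΞ_lower : T ^ s ≤ #Ξ := by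
    refine le_of_mul_le_mul_left (hΞcard.trans' (le_of_eq ?_)) (by positivity)
    rw [← pow_succ']
    rfl
  have hTP : T ^ (e + 1) * #P ≤ T ^ (3 * (s + 2) + e + 2) := by
    calc T ^ (e + 1) * #P ≤ T ^ (e + 1) * T ^ (3 * (s + 2) + 1) := by gcongr
      _ = T ^ (3 * (s + 2) + e + 2) := by rw [← pow_add]; congr 1; lia
  have hΞ_upper := card_pow_four_le_of_isGoodDilate he (by linarith)
    (hP.trans (by gcongr; norm_num)) hΞ
    (hP_lower.trans' (pow_le_pow_right₀ hT₁ (by lia))) (hTP.trans_lt hp)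
  have := (pow_le_pow_left₀ (by positivity) hΞ_lower 4).trans (hΞ_upper.trans hTP)
  rw [← pow_mul, pow_le_pow_iff_right₀ (by linarith)] at this
  lia

end SumProduct

section RandomDeletion

section Hypergraph

variable {V : Type*} {D : Finset V} {E : Finset (Finset V)}

lemma exists_subset_forall_not_subset (D : Finset V) (hE : ∀ e ∈ E, e.Nonempty) :
    ∃ S ⊆ D, #D ≤ #S + #E ∧ ∀ e ∈ E, ¬ e ⊆ S := by
  classical
  choose v hv using hE
  set W := E.attach.image fun e => v e.1 e.2
  refine ⟨D \ W, sdiff_subset, ?_, fun e he heS => ?_⟩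
  · have := le_card_sdiff W D
    have : #W ≤ #E := card_image_le.trans_eq E.card_attach
    lia
  · exact (mem_sdiff.1 (heS (hv e he))).2 (mem_image_of_mem _ (mem_attach E ⟨e, he⟩))

variable {r m : ℕ}

lemma card_filter_forall_eq_zero_mul_pow [DecidableEq V] [Fintype V] [NeZero m] (e : Finset V) :
    #{χ : V → Fin m | ∀ v ∈ e, χ v = 0} * m ^ #e = m ^ Fintype.card V := by
  have as_pi : ({χ : V → Fin m | ∀ v ∈ e, χ v = 0} : Finset (V → Fin m)) =
      Fintype.piFinset fun v => if v ∈ e then {0} else univ := by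
    ext χ
    simp only [mem_filter, mem_univ, true_and, Fintype.mem_piFinset]
    refine forall_congr' fun v => ?_
    by_cases hv : v ∈ e <;> simp [hv]
  have pow_card : m ^ #e = ∏ v : V, if v ∈ e then m else 1 := by
    rw [prod_ite_mem, univ_inter, prod_const]
  rw [as_pi, Fintype.card_piFinset, pow_card, ← prod_mul_distrib, ← card_univ, ← prod_const]
  refine prod_congr rfl fun v _ => ?_
  by_cases hv : v ∈ e <;> simp [hv]

-- Average over the first colour class of all colourings of `V` with `m` colours.
lemma exists_card_le_mul_card_inter_sub [DecidableEq V] [Finite V] (hm : 0 < m)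
    (hE : ∀ e ∈ E, #e = r + 1) (h : 2 * (#E : ℝ) ≤ #D * (m : ℝ) ^ r) :
    ∃ S : Finset V, (#D : ℝ) ≤ 2 * m * (#(D ∩ S) - #{e ∈ E | e ⊆ S}) := by
  cases nonempty_fintype V
  have : NeZero m := ⟨hm.ne'⟩
  have : (0 : ℝ) < m := Nat.cast_pos.2 hm
  set M := (m : ℝ) ^ Fintype.card V with hM
  have count (e : Finset V) : (#{χ : V → Fin m | ∀ v ∈ e, χ v = 0} : ℝ) = M / m ^ #e := by
    rw [eq_div_iff (by positivity), hM]
    exact mod_cast card_filter_forall_eq_zero_mul_pow (m := m) e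
  have vertices : ∑ χ : V → Fin m, (#{v ∈ D | χ v = 0} : ℝ) = #D * (M / m) := by
    rw [sum_card_filter_comm univ D fun (χ : V → Fin m) v => χ v = 0, ← nsmul_eq_mul, ← sum_const]
    exact sum_congr rfl fun v _ => by simpa using count {v}
  have edges : ∑ χ : V → Fin m, (#{e ∈ E | ∀ v ∈ e, χ v = 0} : ℝ) = #E * (M / m ^ (r + 1)) := by
    rw [sum_card_filter_comm univ E fun (χ : V → Fin m) e => ∀ v ∈ e, χ v = 0,
      ← nsmul_eq_mul, ← sum_const]
    exact sum_congr rfl fun e he => by rw [count e, hE e he]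
  obtain ⟨χ, -, hχ⟩ := exists_le_of_sum_le (s := (univ : Finset (V → Fin m))) univ_nonempty
    (f := fun _ => (#D : ℝ))
    (g := fun χ : V → Fin m =>
      2 * m * ((#{v ∈ D | χ v = 0} : ℝ) - #{e ∈ E | ∀ v ∈ e, χ v = 0})) <| by
    rw [← mul_sum, sum_sub_distrib, vertices, edges, sum_const, card_univ, nsmul_eq_mul,
      Fintype.card_fun, Fintype.card_fin, Nat.cast_pow, pow_succ]
    calc M * #D = 2 * #D * M - #D * m ^ r * (M / m ^ r) := by field_simp; ring
      _ ≤ 2 * #D * M - 2 * #E * (M / m ^ r) := by gcongr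
      _ = 2 * m * (#D * (M / m) - #E * (M / (m ^ r * m))) := by field_simp
  refine ⟨({v | χ v = 0} : Finset V), hχ.trans_eq ?_⟩
  simp only [subset_iff, ← filter_mem_eq_inter, mem_filter, mem_univ, true_and]

lemma exists_subset_card_le_forall_not_subset [Finite V] (hm : 0 < m) (hE : ∀ e ∈ E, #e = r + 1)
    (h : 2 * (#E : ℝ) ≤ #D * (m : ℝ) ^ r) :
    ∃ S ⊆ D, (#D : ℝ) ≤ 2 * m * #S ∧ ∀ e ∈ E, ¬ e ⊆ S := by
  classical
  obtain ⟨R, hR⟩ := exists_card_le_mul_card_inter_sub hm hE h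
  obtain ⟨S, hSD, hScard, hSE⟩ := exists_subset_forall_not_subset (E := {e ∈ E | e ⊆ R}) (D ∩ R)
    fun e he => card_pos.1 (by rw [hE e (filter_subset _ _ he)]; exact r.succ_pos)
  refine ⟨S, hSD.trans inter_subset_left, hR.trans ?_, fun e he heS => ?_⟩
  · gcongr
    rw [sub_le_iff_le_add]
    exact mod_cast hScard
  · exact hSE e (mem_filter.2 ⟨he, heS.trans (hSD.trans inter_subset_right)⟩) heS

end Hypergraph

variable {G : Type*} [AddCommGroup G] [DecidableEq G] {D S X : Finset G} {k m : ℕ} {μ : G}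

lemma exists_subset_disjoint_vadd_card_le (X : Finset G) (hμ : μ ≠ 0) :
    ∃ Y ⊆ X, Disjoint Y (μ +ᵥ Y) ∧ #X ≤ 3 * #Y := by
  obtain ⟨Y, hY, hmax⟩ := exists_max_image {Y ∈ X.powerset | Disjoint Y (μ +ᵥ Y)} card
    ⟨∅, by simp⟩
  simp only [mem_filter, mem_powerset] at hY hmax
  refine ⟨Y, hY.1, hY.2, ?_⟩
  have cover : X ⊆ Y ∪ ((μ +ᵥ Y) ∪ (-μ +ᵥ Y)) := by
    intro x hx
    by_contra hx'
    simp only [mem_union, not_or] at hx'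
    obtain ⟨hxY, hxμ, hxμ'⟩ := hx'
    have := hmax (insert x Y) ⟨insert_subset hx hY.1, by
      rw [vadd_finset_insert, disjoint_insert_left, disjoint_insert_right, mem_insert]
      refine ⟨not_or.2 ⟨?_, hxμ⟩, ?_, hY.2⟩
      · simpa using hμ
      · rwa [← mem_neg_vadd_finset_iff]⟩
    rw [card_insert_of_notMem hxY] at this
    lia
  calc #X ≤ #(Y ∪ ((μ +ᵥ Y) ∪ (-μ +ᵥ Y))) := card_le_card cover
    _ ≤ #Y + (#(μ +ᵥ Y) + #(-μ +ᵥ Y)) :=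
      (card_union_le _ _).trans (Nat.add_le_add_left (card_union_le _ _) _)
    _ = 3 * #Y := by rw [card_vadd_finset, card_vadd_finset]; ring

/-- The sets `Y ∪ (μ +ᵥ Y)` contained in `D` with `#Y = k` and with `Y` disjoint from its translate.
They are the obstructions to `D` having few representations of `μ` as a difference. -/
def translateUnions (D : Finset G) (k : ℕ) (μ : G) : Finset (Finset G) :=
  {Y ∈ {x ∈ D | x + μ ∈ D}.powersetCard k | Disjoint Y (μ +ᵥ Y)}.image fun Y => Y ∪ (μ +ᵥ Y)

lemma card_translateUnions_le (D : Finset G) (k : ℕ) (μ : G) :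
    #(translateUnions D k μ) ≤ subPairCount μ D ^ k := by
  refine card_image_le.trans ((card_filter_le _ _).trans ?_)
  rw [card_powersetCard, subPairCount_eq_card_filter]
  exact Nat.choose_le_pow _ _

lemma card_of_mem_translateUnions {e : Finset G} (he : e ∈ translateUnions D k μ) :
    #e = 2 * k := by
  obtain ⟨Y, hY, rfl⟩ := mem_image.1 he
  obtain ⟨hYD, hYμ⟩ := mem_filter.1 hY
  rw [card_union_of_disjoint hYμ, card_vadd_finset, (mem_powersetCard.1 hYD).2, two_mul]

lemma exists_mem_translateUnions_subset (hS : S ⊆ D) (hμ : μ ≠ 0)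
    (h : 3 * k < subPairCount μ S) : ∃ e ∈ translateUnions D (k + 1) μ, e ⊆ S := by
  rw [subPairCount_eq_card_filter] at h
  obtain ⟨X, hXS, hXμ, hX⟩ := exists_subset_disjoint_vadd_card_le {x ∈ S | x + μ ∈ S} hμ
  obtain ⟨Y, hYX, hY⟩ := exists_subset_card_eq (by lia : k + 1 ≤ #X)
  have hYS : ∀ x ∈ Y, x ∈ S ∧ x + μ ∈ S := fun x hx => mem_filter.1 (hXS (hYX hx))
  refine ⟨Y ∪ (μ +ᵥ Y), mem_image_of_mem _ (mem_filter.2 ⟨mem_powersetCard.2 ⟨fun x hx => ?_, hY⟩,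
    hXμ.mono hYX (vadd_finset_subset_vadd_finset hYX)⟩), union_subset (fun x hx => (hYS x hx).1) ?_⟩
  · exact mem_filter.2 ⟨hS (hYS x hx).1, hS (hYS x hx).2⟩
  · intro x hx
    obtain ⟨y, hy, rfl⟩ := mem_vadd_finset.1 hx
    rw [vadd_eq_add, add_comm]
    exact (hYS y hy).2

variable [Fintype G]

lemma exists_isAddSidon_subset_card_le (hm : 0 < m)
    (h : 2 * ∑ μ ∈ univ.erase (0 : G), (subPairCount μ D : ℝ) ^ (k + 1) ≤
      #D * (m : ℝ) ^ (2 * k + 1)) :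
    ∃ S ⊆ D, (#D : ℝ) ≤ 2 * m * #S ∧ IsAddSidon (3 * k) S := by
  obtain ⟨S, hSD, hS, hfree⟩ := exists_subset_card_le_forall_not_subset (r := 2 * k + 1)
    (E := (univ.erase 0).biUnion (translateUnions D (k + 1))) hm
    (fun e he => by
      obtain ⟨μ, -, he⟩ := mem_biUnion.1 he
      rw [card_of_mem_translateUnions he]
      ring)
    (h.trans' <| by
      gcongr
      exact mod_cast card_biUnion_le.trans (sum_le_sum fun μ _ => card_translateUnions_le D _ μ))
  refine ⟨S, hSD, hS, fun μ hμ => ?_⟩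
  by_contra! hlt
  obtain ⟨e, he, heS⟩ := exists_mem_translateUnions_subset hSD hμ (mod_cast hlt)
  exact hfree e (mem_biUnion.2 ⟨μ, mem_erase.2 ⟨hμ, mem_univ μ⟩, he⟩) heS

lemma sum_subPairCount_pow_le (D : Finset G) (k : ℕ) {t : ℝ} (ht : 0 ≤ t) :
    ∑ μ ∈ univ.erase (0 : G), (subPairCount μ D : ℝ) ^ (k + 1) ≤
      #((popDiff D t).erase 0) * (#D : ℝ) ^ (k + 1) + (#D : ℝ) ^ 2 * t ^ k := by
  rw [← sum_filter_add_sum_filter_not (univ.erase (0 : G)) fun μ => t ≤ subPairCount μ D]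
  gcongr ?_ + ?_
  · rw [filter_erase, ← popDiff, ← nsmul_eq_mul]
    refine sum_le_card_nsmul _ _ _ fun μ _ => ?_
    gcongr
    exact subPairCount_le_card μ D
  · calc ∑ μ ∈ univ.erase (0 : G) with ¬ t ≤ subPairCount μ D, (subPairCount μ D : ℝ) ^ (k + 1)
        ≤ ∑ μ ∈ univ.erase (0 : G) with ¬ t ≤ subPairCount μ D, subPairCount μ D * t ^ k := by
          refine sum_le_sum fun μ hμ => ?_
          have := (not_le.1 (mem_filter.1 hμ).2).le
          rw [pow_succ']
          gcongr
      _ ≤ ∑ μ, subPairCount μ D * t ^ k :=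
          sum_le_sum_of_subset_of_nonneg (subset_univ _) fun _ _ _ => by positivity
      _ = (#D : ℝ) ^ 2 * t ^ k := by
          rw [← sum_mul, ← Nat.cast_pow, ← sum_subPairCount, Nat.cast_sum]

lemma exists_isAddSidon_subset_card_le_of_card_popDiff_le {N R t : ℝ} (hm : 0 < m) (ht : 0 ≤ t)
    (hN : #D ≤ N) (hR : #((popDiff D t).erase 0) ≤ R)
    (popular : 4 * (R * N ^ k) ≤ (m : ℝ) ^ (2 * k + 1))
    (unpopular : 4 * (N * t ^ k) ≤ (m : ℝ) ^ (2 * k + 1)) :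
    ∃ S ⊆ D, (#D : ℝ) ≤ 2 * m * #S ∧ IsAddSidon (3 * k) S := by
  have hR₀ : 0 ≤ R := hR.trans' (Nat.cast_nonneg _)
  refine exists_isAddSidon_subset_card_le hm ?_
  calc _ ≤ 2 * (R * (#D : ℝ) ^ (k + 1) + (#D : ℝ) ^ 2 * t ^ k) := by
        gcongr
        exact (sum_subPairCount_pow_le D k ht).trans (by gcongr)
    _ = 2 * #D * (R * (#D : ℝ) ^ k + #D * t ^ k) := by ring
    _ ≤ 2 * #D * (R * N ^ k + N * t ^ k) := by gcongr
    _ ≤ 2 * #D * ((m : ℝ) ^ (2 * k + 1) / 4 + (m : ℝ) ^ (2 * k + 1) / 4) := by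
        gcongr <;> linarith
    _ = #D * (m : ℝ) ^ (2 * k + 1) := by ring

-- With `#D ≈ y ^ (60 (k + 1))`, a random subset of density `1 / m ≈ y ^ (-30 k - 25)` has more than
-- `√#D` elements, and popular as well as unpopular differences cost it only a fraction of them.
lemma exists_isAddSidon_subset_of_card_popDiff_le {y : ℝ} (hy : 2 ≤ y) (hk : 1 ≤ k)
    (hlower : y ^ (60 * (k + 1)) / y ^ 2 ≤ #D) (hupper : #D ≤ y ^ (60 * (k + 1)))
    (hpop : #((popDiff D (y ^ (60 * (k + 1)) / y ^ 77)).erase 0) ≤ y ^ (20 * (k + 1))) :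
    ∃ S ⊆ D, y ^ (30 * (k + 1) + 1) ≤ #S ∧ IsAddSidon (3 * k) S := by
  have hy₀ : 0 < y := by linarith
  have pow_mono {a b : ℕ} (h : a ≤ b) : y ^ a ≤ y ^ b := pow_le_pow_right₀ (by linarith) h
  have hy4 : 4 ≤ y ^ 2 := by nlinarith
  have threshold : y ^ (60 * (k + 1)) / y ^ 77 = y ^ (60 * (k - 1) + 43) := by
    rw [div_eq_iff (by positivity), ← pow_add]
    congr 1
    lia
  rw [threshold] at hpop
  obtain ⟨m, hm_lower, hm_upper⟩ : ∃ m : ℕ, y ^ (30 * k + 25) ≤ m ∧ m ≤ y ^ (30 * k + 26) := by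
    refine ⟨_, Nat.le_ceil _, (Nat.ceil_lt_add_one (by positivity)).le.trans ?_⟩
    rw [pow_succ _ (30 * k + 25)]
    nlinarith [one_le_pow₀ (by linarith : 1 ≤ y) (n := 30 * k + 25)]
  have hm : 0 < m := Nat.cast_pos.1 ((by positivity : 0 < y ^ (30 * k + 25)).trans_le hm_lower)
  have popular : 4 * (y ^ (20 * (k + 1)) * (y ^ (60 * (k + 1))) ^ k) ≤ (m : ℝ) ^ (2 * k + 1) := by
    calc _ ≤ y ^ 2 * (y ^ (20 * (k + 1)) * (y ^ (60 * (k + 1))) ^ k) := by gcongr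
      _ ≤ (y ^ (30 * k + 25)) ^ (2 * k + 1) := by
        simp only [← pow_mul, ← pow_add]
        exact pow_mono (by ring_nf; lia)
      _ ≤ _ := by gcongr
  have unpopular : 4 * (y ^ (60 * (k + 1)) * (y ^ (60 * (k - 1) + 43)) ^ k) ≤
      (m : ℝ) ^ (2 * k + 1) := by
    obtain ⟨l, rfl⟩ := Nat.exists_eq_add_of_le' hk
    calc _ ≤ y ^ 2 * (y ^ (60 * (l + 1 + 1)) * (y ^ (60 * (l + 1 - 1) + 43)) ^ (l + 1)) := by gcongr
      _ ≤ (y ^ (30 * (l + 1) + 25)) ^ (2 * (l + 1) + 1) := by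
        simp only [← pow_mul, ← pow_add, Nat.add_sub_cancel]
        exact pow_mono (by ring_nf; lia)
      _ ≤ _ := by gcongr
  obtain ⟨S, hSD, hS, hSidon⟩ := exists_isAddSidon_subset_card_le_of_card_popDiff_le hm
    (by positivity) hupper hpop popular unpopular
  refine ⟨S, hSD, le_of_mul_le_mul_left ?_ (by positivity : 0 < y ^ (30 * k + 27)), hSidon⟩
  calc y ^ (30 * k + 27) * y ^ (30 * (k + 1) + 1) = y ^ (60 * (k + 1)) / y ^ 2 := by
        rw [eq_div_iff (by positivity), ← pow_add, ← pow_add]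
        congr 1
        ring
    _ ≤ 2 * m * #S := hlower.trans hS
    _ ≤ y * y ^ (30 * k + 26) * #S := by gcongr
    _ = y ^ (30 * k + 27) * #S := by ring

end RandomDeletion

section Exp

variable {p : ℕ} {g : ZMod p}

/-- The discrete exponential `x ↦ g ^ ι(x)` modulo `p`. It agrees with that of the paper on nonzero
residues; its value `1` at `0` is a junk value. -/
def expMap (g x : ZMod p) : ZMod p := g ^ x.val

variable [Fact p.Prime]

lemma ne_zero_of_isPrimitiveRoot (hg : IsPrimitiveRoot g (p - 1)) : g ≠ 0 :=
  (hg.isUnit (Nat.sub_ne_zero_of_lt (Fact.out : p.Prime).one_lt)).ne_zero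

lemma expMap_ne_zero (hg : IsPrimitiveRoot g (p - 1)) (x : ZMod p) : expMap g x ≠ 0 :=
  pow_ne_zero _ (ne_zero_of_isPrimitiveRoot hg)

lemma injOn_expMap (hg : IsPrimitiveRoot g (p - 1)) : Set.InjOn (expMap g) {0}ᶜ := by
  intro x hx y hy h
  obtain ⟨a, ha⟩ := Nat.exists_eq_succ_of_ne_zero ((ZMod.val_ne_zero x).2 hx)
  obtain ⟨b, hb⟩ := Nat.exists_eq_succ_of_ne_zero ((ZMod.val_ne_zero y).2 hy)
  have hxp := ZMod.val_lt x
  have hyp := ZMod.val_lt y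
  rw [expMap, expMap, ha, hb, pow_succ, pow_succ] at h
  have := hg.pow_inj (by lia) (by lia) (mul_right_cancel₀ (ne_zero_of_isPrimitiveRoot hg) h)
  exact ZMod.val_injective p (by lia)

-- The two cases are `ι(x) + ι(μ) < p` and `ι(x) + ι(μ) ≥ p`: `g` has order `p - 1`, not `p`.
lemma expMap_add (hg : g ≠ 0) (x μ : ZMod p) :
    expMap g (x + μ) = expMap g μ * expMap g x ∨
      expMap g (x + μ) = expMap g μ * g⁻¹ * expMap g x := by
  obtain h | h := lt_or_ge (x.val + μ.val) p
  · left
    rw [expMap, ZMod.val_add_of_lt h, pow_add, mul_comm, expMap, expMap]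
  · right
    have : expMap g x * expMap g μ = expMap g (x + μ) * g := by
      rw [expMap, expMap, expMap, ← pow_add, ZMod.val_add_val_of_le h, pow_add, ZMod.pow_card]
    rw [eq_div_of_mul_eq hg this.symm]
    ring

lemma subPairCount_le_card_filter_expMap_mul (hg : IsPrimitiveRoot g (p - 1))
    {C D : Finset (ZMod p)} (hC : 0 ∉ C) (hCD : ∀ x ∈ C, expMap g x ∈ D) (μ : ZMod p) :
    subPairCount μ C ≤
      #{x ∈ D | expMap g μ * x ∈ D} + #{x ∈ D | expMap g μ * g⁻¹ * x ∈ D} := by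
  rw [subPairCount_eq_card_filter]
  refine (card_le_card_of_injOn (expMap g) (fun x hx => ?_) fun x hx y hy => ?_).trans
    (card_union_le {x ∈ D | expMap g μ * x ∈ D} {x ∈ D | expMap g μ * g⁻¹ * x ∈ D})
  · obtain ⟨hxC, hxμ⟩ := mem_filter.1 hx
    have hD := hCD _ hxμ
    rw [mem_coe, mem_union, mem_filter, mem_filter]
    obtain h | h := expMap_add (ne_zero_of_isPrimitiveRoot hg) x μ <;> rw [h] at hD
    · exact .inl ⟨hCD x hxC, hD⟩
    · exact .inr ⟨hCD x hxC, hD⟩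
  · exact injOn_expMap hg (ne_of_mem_of_not_mem (mem_filter.1 hx).1 hC)
      (ne_of_mem_of_not_mem (mem_filter.1 hy).1 hC)

lemma card_erase_popDiff_le_two_mul_card_popRatio (hg : IsPrimitiveRoot g (p - 1))
    {C D : Finset (ZMod p)} (hC : 0 ∉ C) (hCD : ∀ x ∈ C, expMap g x ∈ D) (t : ℝ) :
    #((popDiff C t).erase 0) ≤ 2 * #(popRatio D (t / 2)) := by
  have hg₀ := ne_zero_of_isPrimitiveRoot hg
  have card_le {a : ZMod p} (ha : a ≠ 0) :
      #{μ ∈ (popDiff C t).erase 0 | expMap g μ * a ∈ popRatio D (t / 2)} ≤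
        #(popRatio D (t / 2)) := by
    refine card_le_card_of_injOn (expMap g · * a) (fun μ hμ => (mem_filter.1 hμ).2) ?_
    refine (mul_left_injective₀ ha).comp_injOn ((injOn_expMap hg).mono fun μ hμ => ?_)
    exact (mem_erase.1 (mem_filter.1 hμ).1).1
  rw [two_mul]
  refine (card_le_card fun μ hμ => ?_).trans ((card_union_le _ _).trans
    (add_le_add (card_le one_ne_zero) (card_le (inv_ne_zero hg₀))))
  have ht : t ≤ (subPairCount μ C : ℝ) := mem_popDiff.1 (mem_of_mem_erase hμ)
  have := ht.trans (Nat.cast_le.2 (subPairCount_le_card_filter_expMap_mul hg hC hCD μ))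
  rw [mem_union, mem_filter, mem_filter, mul_one, mem_popRatio, mem_popRatio]
  by_contra! h
  push_cast at this
  linarith [h.1 hμ, h.2 hμ]

end Exp

section Scales

variable {G : Type*} [AddCommGroup G] {B C : Finset G}

lemma isAddSidon_mono {K L : ℝ} (h : K ≤ L) (hC : IsAddSidon K C) : IsAddSidon L C :=
  fun μ hμ => (hC μ hμ).trans h

lemma exists_isAddSidon_subset_of_card_le {M a : ℝ} (hM : 1 ≤ M) (ha : 0 < a) (hB : #B ≤ M) :
    ∃ S ⊆ B, IsAddSidon 1 S ∧ (M ^ a)⁻¹ * (#B : ℝ) ^ a ≤ #S := by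
  obtain rfl | ⟨x, hx⟩ := B.eq_empty_or_nonempty
  · exact ⟨∅, subset_rfl, fun μ _ => by simp [subPairCount], by simp [Real.zero_rpow ha.ne']⟩
  · refine ⟨{x}, by simpa using hx, fun μ _ => mod_cast subPairCount_le_card μ {x}, ?_⟩
    rw [card_singleton, Nat.cast_one, inv_mul_le_iff₀ (by positivity), mul_one]
    gcongr

variable [Fintype G] [DecidableEq G]

lemma exists_isAddSidon_subset_or_lt_card_popDiff {z : ℝ} {a b w : ℕ} (hz : 2 ≤ z)
    (ha : 1 ≤ a) (hb : 2 ≤ b) (hw : a * b = w) (hlower : z ^ (60 * w) / (z ^ a) ^ 2 ≤ #C)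
    (hupper : #C ≤ z ^ (60 * w)) :
    (∃ S ⊆ C, IsAddSidon (3 * w) S ∧ z ^ (30 * w + 1) ≤ #S) ∨
      z ^ (20 * w) < #((popDiff C (z ^ (60 * w) / (z ^ a) ^ 77)).erase 0) := by
  obtain ⟨k, rfl⟩ := Nat.exists_eq_add_of_le' (one_le_two.trans hb)
  have pow_scale (n : ℕ) : z ^ (n * w) = (z ^ a) ^ (n * (k + 1)) := by
    rw [← pow_mul, ← hw]
    ring_nf
  rw [pow_scale] at hlower hupper
  rw [or_iff_not_imp_right, not_lt, pow_scale, pow_scale]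
  intro hpop
  have hz₁ : 1 ≤ z := by linarith
  obtain ⟨S, hSC, hS, hSidon⟩ := exists_isAddSidon_subset_of_card_popDiff_le
    (hz.trans (le_self_pow₀ hz₁ (by lia))) (by lia) hlower hupper hpop
  refine ⟨S, hSC, isAddSidon_mono ?_ hSidon, hS.trans' ?_⟩
  · have : k ≤ w := by nlinarith
    gcongr
  · rw [← pow_mul]
    exact pow_le_pow_right₀ hz₁ (by lia)

lemma exists_card_popDiff_le_mul_card_popDiff {z T : ℝ} {l m r t J : ℕ} (hz : 1 ≤ z) (hlm : l ≤ m)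
    (hT : z ^ m ^ (J + 1) ≤ T) (hB : #B = T ^ t) (ht : t + 1 ≤ J + r)
    (h : ∀ j ≤ J, T ^ r < #((popDiff B (#B / (z ^ m ^ j) ^ l)).erase 0)) :
    ∃ j < J, T ^ r < #(popDiff B (#B / z ^ m ^ (j + 1))) ∧
      #(popDiff B (#B / (z ^ m ^ (j + 1)) ^ m)) ≤ T * #(popDiff B (#B / z ^ m ^ (j + 1))) := by
  have hT₁ : 1 ≤ T := hT.trans' (one_le_pow₀ hz)
  have hBne : B.Nonempty := by
    rw [← card_pos, ← Nat.cast_pos (α := ℝ), hB]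
    positivity
  have many_differences (j : ℕ) (hj : j ≤ J) : T ^ r < #(popDiff B (#B / z ^ m ^ (j + 1))) := by
    refine (h j hj).trans_le
      (Nat.cast_le.2 (card_le_card ((erase_subset _ _).trans (popDiff_anti ?_))))
    rw [pow_succ m j, pow_mul z]
    have := one_le_pow₀ (n := m ^ j) hz
    gcongr
  obtain ⟨j, hj, hstep⟩ := exists_le_mul_of_lt_pow_mul (T := T) (J := J)
    (s := fun j => (#(popDiff B (#B / z ^ m ^ (j + 1))) : ℝ)) (by positivity) <|
      calc _ ≤ #B * z ^ m ^ (J + 1) := card_popDiff_div_le hBne (by positivity)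
        _ ≤ T ^ t * T := by rw [hB]; gcongr
        _ ≤ T ^ J * T ^ r := by
          rw [← pow_succ, ← pow_add]
          exact pow_le_pow_right₀ hT₁ ht
        _ < _ := by
          gcongr
          exact many_differences 0 J.zero_le
  exact ⟨j, hj, many_differences j hj.le, by rwa [← pow_mul, ← pow_succ]⟩

end Scales

section Main

variable {p : ℕ} [Fact p.Prime] {g : ZMod p} {A : Finset (ZMod p)}

lemma forall_le_card_popRatio {y N M : ℝ} (hg : IsPrimitiveRoot g (p - 1)) (hA : 0 ∉ A)
    (hy : 2 ≤ y) (hN : 0 ≤ N)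
    (h : ∀ C ⊆ A, N / y ^ 2 ≤ #C → 2 * M ≤ #((popDiff C (N / y ^ 77)).erase 0)) :
    ∀ D ⊆ A.image (expMap g), N / y ^ 2 ≤ #D → M ≤ #(popRatio D (N / y ^ 78)) := by
  intro D hDA hD
  set C := {x ∈ A | expMap g x ∈ D}
  have hDC : #D ≤ #C := by
    refine (card_le_card fun d hd => ?_).trans (card_image_le (f := expMap g))
    obtain ⟨x, hx, rfl⟩ := mem_image.1 (hDA hd)
    exact mem_image_of_mem _ (mem_filter.2 ⟨hx, hd⟩)
  have popular : M ≤ #(popRatio D (N / y ^ 77 / 2)) := by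
    have := h C (filter_subset _ _) (hD.trans (Nat.cast_le.2 hDC))
    have : (#((popDiff C (N / y ^ 77)).erase 0) : ℝ) ≤ 2 * #(popRatio D (N / y ^ 77 / 2)) :=
      mod_cast card_erase_popDiff_le_two_mul_card_popRatio hg
        (fun h₀ => hA (filter_subset _ _ h₀)) (fun x hx => (mem_filter.1 hx).2) _
    linarith
  refine popular.trans (Nat.cast_le.2 (card_le_card (popRatio_anti ?_)))
  rw [div_div, pow_succ]
  gcongr

lemma false_of_forall_lt_card_popDiff {z T : ℝ} {e ρ : ℕ} (he : 13 * 132 ^ 2 ≤ e)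
    (hρ : e + 11 ≤ 20 * ρ) (hz : 2 ≤ z) (hT : z ^ 322 ^ (40 * ρ + 3) = T)
    (hg : IsPrimitiveRoot g (p - 1)) (hA : 0 ∉ A) (hcard : #A = T ^ (60 * ρ))
    (hp : T ^ (60 * ρ + (e + 2)) < p)
    (popular : ∀ j ≤ 40 * ρ + 2, ∀ C, (C ⊆ A ∨ C ⊆ A.image (expMap g)) →
      #A / (z ^ 322 ^ j) ^ 2 ≤ #C →
        T ^ (20 * ρ) < #((popDiff C (#A / (z ^ 322 ^ j) ^ 77)).erase 0)) : False := by
  set B := A.image (expMap g) with hB_def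
  have hBA : #B = #A :=
    card_image_of_injOn ((injOn_expMap hg).mono fun x hx => ne_of_mem_of_not_mem hx hA)
  have hB₀ : 0 ∉ B := by simp [hB_def, expMap_ne_zero hg]
  have hz₁ : 1 ≤ z := by linarith
  have two_le_scale (j : ℕ) : 2 ≤ z ^ 322 ^ j := hz.trans (le_self_pow₀ hz₁ (by positivity))
  have h60 : 3 * (20 * ρ) = 60 * ρ := by lia
  obtain ⟨j, hj, hdiff, hstep⟩ := exists_card_popDiff_le_mul_card_popDiff (l := 77) (r := 20 * ρ)
    (B := B) hz₁ (by norm_num) hT.le (hBA ▸ hcard) (by lia) fun j hj =>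
      hBA ▸ popular j hj B (.inr subset_rfl)
        (hBA ▸ div_le_self (by positivity) (one_le_pow₀ (one_le_pow₀ hz₁)))
  refine false_of_card_popDiff_of_card_popRatio he hρ (two_le_scale (j + 1)) ?_ hB₀ ?_ ?_
    hdiff.le hstep ?_
  · rw [← pow_mul, ← pow_succ, ← hT]
    exact pow_le_pow_right₀ hz₁ (Nat.pow_le_pow_right (by lia) (by lia))
  · rw [hBA, hcard, h60]
  · rwa [h60, add_assoc]
  · rw [hBA]
    refine forall_le_card_popRatio hg hA (two_le_scale (j + 1)) (by positivity)
      fun C hC hAC => (popular (j + 1) (by lia) C (.inl hC) hAC).le.trans' ?_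
    rw [← mul_pow_sub_one (a := T) (n := 20 * ρ) (by lia), ← hT]
    gcongr
    exact two_le_scale _

lemma exists_isAddSidon_subset_or_subset_image {z : ℝ} {e ρ w : ℕ} (he : 13 * 132 ^ 2 ≤ e)
    (hρ : e + 11 ≤ 20 * ρ) (hw : 322 ^ (40 * ρ + 3) * ρ = w) (hg : IsPrimitiveRoot g (p - 1))
    (hA : 0 ∉ A) (hz : 2 ≤ z) (hcard : #A = z ^ (60 * w))
    (hp : (z ^ 322 ^ (40 * ρ + 3)) ^ (60 * ρ + (e + 2)) < p) :
    ∃ S, (S ⊆ A ∨ S ⊆ A.image (expMap g)) ∧ IsAddSidon (3 * w) S ∧ z ^ (30 * w + 1) ≤ #S := by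
  by_contra! hno
  have pow_scale (n : ℕ) : (z ^ 322 ^ (40 * ρ + 3)) ^ (n * ρ) = z ^ (n * w) := by
    rw [← pow_mul, ← hw, mul_left_comm]
  refine false_of_forall_lt_card_popDiff he hρ hz rfl hg hA (by rw [hcard, pow_scale]) hp
    fun j hj C hC hAC => ?_
  have hCA : #C ≤ #A := hC.elim card_le_card fun h => (card_le_card h).trans card_image_le
  rw [hcard] at hAC ⊢
  rw [pow_scale]
  refine (exists_isAddSidon_subset_or_lt_card_popDiff (b := 322 ^ (40 * ρ + 3 - j) * ρ) hz
    (Nat.one_le_pow _ _ (by lia)) ?_ ?_ hAC (hcard ▸ Nat.cast_le.2 hCA)).resolve_left ?_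
  · exact (Nat.le_mul_of_pos_left _ (by positivity)).trans' (by lia)
  · rw [← mul_assoc, ← pow_add, Nat.add_sub_cancel' (by lia), hw]
  · rintro ⟨S, hSC, hS, hScard⟩
    exact (hno S (hC.imp hSC.trans hSC.trans) hS).not_ge hScard

lemma pow_add_lt_of_pow_le_rpow_one_sub {T q δ : ℝ} {m l : ℕ} (hT : 1 ≤ T) (hq : 1 < q)
    (hδ : 0 < δ) (hl : l ≤ m * δ) (h : T ^ m ≤ q ^ (1 - δ)) : T ^ (m + l) < q := by
  have hT₀ : 0 ≤ T := by linarith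
  calc T ^ (m + l) = T ^ ((m + l : ℕ) : ℝ) := (Real.rpow_natCast _ _).symm
    _ ≤ T ^ (m * (1 + δ)) := by
      refine Real.rpow_le_rpow_of_exponent_le hT ?_
      push_cast
      linarith
    _ = (T ^ m) ^ (1 + δ) := by rw [Real.rpow_mul hT₀, Real.rpow_natCast]
    _ ≤ (q ^ (1 - δ)) ^ (1 + δ) := by gcongr
    _ = q ^ ((1 - δ) * (1 + δ)) := by rw [Real.rpow_mul (by linarith)]
    _ < q := Real.rpow_lt_self_of_one_lt hq (by nlinarith)

lemma exists_isAddSidon_mul_rpow_le {δ : ℝ} {e ρ w : ℕ} (he : 13 * 132 ^ 2 ≤ e)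
    (hρ : e + 11 ≤ 20 * ρ) (hw : 322 ^ (40 * ρ + 3) * ρ = w) (hδ : 0 < δ)
    (hρδ : (e + 2 : ℕ) ≤ (60 * ρ : ℕ) * δ) (hg : IsPrimitiveRoot g (p - 1)) (hA : 0 ∉ A)
    (hcard : #A ≤ (p : ℝ) ^ (1 - δ)) :
    ∃ S, (S ⊆ A ∨ S ⊆ A.image (expMap g)) ∧ IsAddSidon (3 * w) S ∧
      (((2 : ℝ) ^ (60 * w)) ^ (1 / 2 + 1 / (60 * w) : ℝ))⁻¹ *
        (#A : ℝ) ^ (1 / 2 + 1 / (60 * w) : ℝ) ≤ #S := by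
  have hw₁ : 1 ≤ w := hw ▸ Nat.mul_pos (by positivity) (by lia)
  have hw₁' : (1 : ℝ) ≤ w := mod_cast hw₁
  obtain hsmall | hlarge := le_total (#A : ℝ) (2 ^ (60 * w))
  · obtain ⟨S, hSA, hSidon, hS⟩ := exists_isAddSidon_subset_of_card_le
      (a := 1 / 2 + 1 / (60 * w)) (one_le_pow₀ one_le_two) (by positivity) hsmall
    exact ⟨S, .inl hSA, isAddSidon_mono (by linarith) hSidon, hS⟩
  obtain ⟨z, hz₀, hz⟩ : ∃ z : ℝ, 0 ≤ z ∧ z ^ (60 * w) = #A :=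
    ⟨_, by positivity, Real.rpow_inv_natCast_pow (by positivity) (by lia)⟩
  have hz₂ : 2 ≤ z := (pow_le_pow_iff_left₀ zero_le_two hz₀ (by lia)).1 (hz ▸ hlarge)
  obtain ⟨S, hSA, hSidon, hS⟩ := exists_isAddSidon_subset_or_subset_image he hρ hw hg hA hz₂
    hz.symm <| pow_add_lt_of_pow_le_rpow_one_sub (one_le_pow₀ (by linarith))
      (mod_cast (Fact.out : p.Prime).one_lt) hδ hρδ <| by
        rwa [← pow_mul, mul_left_comm, hw, hz]
  refine ⟨S, hSA, hSidon, hS.trans' ?_⟩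
  calc _ ≤ (#A : ℝ) ^ (1 / 2 + 1 / (60 * w) : ℝ) :=
        mul_le_of_le_one_left (by positivity) (inv_le_one_of_one_le₀
          (Real.one_le_rpow (one_le_pow₀ one_le_two) (by positivity)))
    _ = z ^ (30 * w + 1) := by
      rw [← hz, ← Real.rpow_natCast, ← Real.rpow_mul hz₀, ← Real.rpow_natCast]
      congr 1
      push_cast
      field_simp
      ring

end Main

end ExpSidon

theorem stmt10_general (δ : ℝ) (hδ : 0 < δ) :
    ∃ c K c0 : ℝ, 0 < c ∧ 1 ≤ K ∧ 0 < c0 ∧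
      ∀ (p : ℕ) [Fact p.Prime],
        ∀ g : ZMod p, IsPrimitiveRoot g (p - 1) →
          ∀ A : Finset (ZMod p), (∀ x ∈ A, x ≠ 0) → (A.card : ℝ) ≤ (p : ℝ) ^ (1 - δ) →
            ∃ S : Finset (ZMod p),
              (S ⊆ A ∨ S ⊆ A.image (fun x => g ^ x.val)) ∧ IsAddSidon K S ∧
              c0 * (A.card : ℝ) ^ ((1 : ℝ) / 2 + c) ≤ S.card := by
  obtain ⟨e, he⟩ : ∃ e, 13 * 132 ^ 2 ≤ e := ⟨_, le_rfl⟩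
  obtain ⟨m, hm⟩ := exists_nat_ge ((e + 2 : ℕ) / δ)
  obtain ⟨ρ, hρ⟩ : ∃ ρ, ρ = e + 11 + m := ⟨_, rfl⟩
  obtain ⟨w, hw⟩ : ∃ w, 322 ^ (40 * ρ + 3) * ρ = w := ⟨_, rfl⟩
  have hw₁ : (1 : ℝ) ≤ w := mod_cast hw ▸ Nat.mul_pos (by positivity) (by lia)
  have hρδ : ((e + 2 : ℕ) : ℝ) ≤ (60 * ρ : ℕ) * δ :=
    ((div_le_iff₀ hδ).1 hm).trans (by gcongr; lia)
  refine ⟨1 / (60 * w), 3 * w, _, by positivity, by linarith, ?_, fun p _ g hg A hA hcard =>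
    ExpSidon.exists_isAddSidon_mul_rpow_le he (by lia) hw hδ hρδ hg (fun h => hA 0 h rfl) hcard⟩
  positivity

theorem stmt10 :
    ∃ c K c0 : ℝ, 0 < c ∧ 1 ≤ K ∧ 0 < c0 ∧
      ∀ (p : ℕ) [Fact p.Prime],
        ∀ g : ZMod p, IsPrimitiveRoot g (p - 1) →
          ∀ A : Finset (ZMod p), (∀ x ∈ A, x ≠ 0) → (A.card : ℝ) < Real.sqrt p →
            ∃ S : Finset (ZMod p),
              (S ⊆ A ∨ S ⊆ A.image (fun x => g ^ x.val)) ∧ IsAddSidon K S ∧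
              c0 * (A.card : ℝ) ^ ((1 : ℝ) / 2 + c) ≤ S.card := by
  obtain ⟨c, K, c0, hc, hK, hc0, h⟩ := stmt10_general (1 / 2) one_half_pos
  exact ⟨c, K, c0, hc, hK, hc0, fun p _ g hg A hA hcard =>
    h p g hg A hA (hcard.le.trans_eq (by rw [Real.sqrt_eq_rpow]; norm_num))⟩
end

section
/- There is an absolute constant C > 0 such that for every integer k ≥ 1 and every integer N ≥ 1 there exists a finite set A ⊆ ℝ with |A| ≥ N and max{ Sid^×_k(A), Sid^×_k(A+1) } ≤ C·k^{1/2}·|A|^{3/4}, where A + 1 = {a + 1 : a ∈ A}. -/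
open scoped BigOperators

/-- The number of pairs `(x, y) ∈ S × S` with `x = lam * y`. -/
noncomputable def mulPairCount {F : Type*} [Mul F] (lam : F) (S : Finset F) : ℕ :=
  Set.ncard {q : F × F | q.1 ∈ S ∧ q.2 ∈ S ∧ q.1 = lam * q.2}

/-- `S` is multiplicatively `k`-Sidon: for every `lam ≠ 1` the number of pairs
`(x, y) ∈ S × S` with `x = lam * y` is at most `k`. -/
def IsMulSidon {F : Type*} [MulOneClass F] (K : ℝ) (S : Finset F) : Prop :=
  ∀ lam : F, lam ≠ 1 → (mulPairCount lam S : ℝ) ≤ K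

/-!
For an irrational `θ` take `A = {a / (θ + b) : 1 ≤ a, b ≤ n}`, which has `n ^ 2` elements. Since
`a / (θ + b) + 1 = (θ + (a + b)) / (θ + b)`, both `A` and `A + 1` lie in a quotient set `X / V` with
`#V ≤ n` and `#X ≤ 2 * n`. For a `K`-Sidon set `S`, join `x ∈ X` to `v ∈ V` when `x / v ∈ S`. Two
distinct `x, y ∈ X` have at most `K` common neighbours, because each common neighbour `v` gives a
representation `x / v = (x / y) * (y / v)` of the ratio `x / y ≠ 1`. The Kővári–Sós–Turán inequality
then bounds the number of edges, hence also `#S`, by `O(√K * n ^ (3 / 2)) = O(√K * #A ^ (3 / 4))`.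
-/

section

open Finset
open scoped Pointwise

/-- The Kővári–Sós–Turán inequality for bipartite graphs without `K_{2,K+1}`. -/
theorem sq_sum_card_bipartiteBelow_le {α β : Type*} (r : α → β → Prop)
    [∀ a b, Decidable (r a b)] {s : Finset α} {t : Finset β} {K : ℝ}
    (hK : ∀ a ∈ s, ∀ a' ∈ s, a ≠ a' → (#{b ∈ t | r a b ∧ r a' b} : ℝ) ≤ K) :
    (∑ b ∈ t, (#(s.bipartiteBelow r b) : ℝ)) ^ 2 ≤ #t * (#s * (#t + K * (#s - 1))) := by
  classical
  have hpairs : ∑ b ∈ t, (#(s.bipartiteBelow r b) : ℝ) ^ 2 =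
      ∑ p ∈ s ×ˢ s, (#{b ∈ t | r p.1 b ∧ r p.2 b} : ℝ) := by
    have hsquare (b : β) : #(s.bipartiteBelow r b) ^ 2 =
        #((s ×ˢ s).bipartiteBelow (fun p b ↦ r p.1 b ∧ r p.2 b) b) := by
      rw [sq, ← card_product, bipartiteBelow, ← filter_product, bipartiteBelow]
    exact_mod_cast (sum_congr rfl fun b _ ↦ hsquare b).trans
      (sum_card_bipartiteAbove_eq_sum_card_bipartiteBelow _).symm
  have hdiag : ∑ p ∈ s.diag, (#{b ∈ t | r p.1 b ∧ r p.2 b} : ℝ) ≤ #s * #t := by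
    rw [sum_diag, ← nsmul_eq_mul]
    exact sum_le_card_nsmul _ _ _ fun a _ ↦ mod_cast card_filter_le _ _
  have hoffDiag : ∑ p ∈ s.offDiag, (#{b ∈ t | r p.1 b ∧ r p.2 b} : ℝ) ≤
      (#s * #s - #s) * K := by
    have hcard : (#s.offDiag : ℝ) = #s * #s - #s := by
      rw [offDiag_card, Nat.cast_sub (Nat.le_mul_self _), Nat.cast_mul]
    rw [← hcard, ← nsmul_eq_mul]
    refine sum_le_card_nsmul _ _ _ fun p hp ↦ ?_
    obtain ⟨h₁, h₂, hne⟩ := mem_offDiag.1 hp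
    exact hK _ h₁ _ h₂ hne
  calc (∑ b ∈ t, (#(s.bipartiteBelow r b) : ℝ)) ^ 2
      ≤ #t * ∑ b ∈ t, (#(s.bipartiteBelow r b) : ℝ) ^ 2 := sq_sum_le_card_mul_sum_sq
    _ ≤ #t * (#s * #t + (#s * #s - #s) * K) := by
      rw [hpairs, ← diag_union_offDiag, sum_union (disjoint_diag_offDiag s)]
      gcongr
    _ = #t * (#s * (#t + K * (#s - 1))) := by ring

theorem card_le_sum_card_bipartiteBelow_div {G : Type*} [Div G] [DecidableEq G]
    {S X V : Finset G} (hS : S ⊆ X / V) :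
    #S ≤ ∑ v ∈ V, #(X.bipartiteBelow (fun x v ↦ x / v ∈ S) v) := by
  have hcover : S ⊆ V.biUnion fun v ↦
      (X.bipartiteBelow (fun x v ↦ x / v ∈ S) v).image (· / v) := by
    intro s hs
    obtain ⟨x, hx, v, hv, rfl⟩ := mem_div.1 (hS hs)
    exact mem_biUnion.2 ⟨v, hv, mem_image_of_mem _ ((mem_bipartiteBelow _).2 ⟨hx, hs⟩)⟩
  exact (card_le_card hcover).trans <| card_biUnion_le.trans <|
    sum_le_sum fun v _ ↦ card_image_le

namespace IsMulSidon

variable {G : Type*} [GroupWithZero G] [DecidableEq G] {K : ℝ} {S X V : Finset G}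

theorem card_filter_div_mem_le (hS : IsMulSidon K S) {x y : G} (hx : x ≠ 0) (hy : y ≠ 0)
    (hxy : x ≠ y) (V : Finset G) : (#{v ∈ V | x / v ∈ S ∧ y / v ∈ S} : ℝ) ≤ K := by
  have hfinite : {q : G × G | q.1 ∈ S ∧ q.2 ∈ S ∧ q.1 = x / y * q.2}.Finite :=
    (S ×ˢ S).finite_toSet.subset fun q hq ↦ mem_coe.2 (mem_product.2 ⟨hq.1, hq.2.1⟩)
  have hcount : #{v ∈ V | x / v ∈ S ∧ y / v ∈ S} ≤ mulPairCount (x / y) S := by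
    rw [← Set.ncard_coe_finset]
    refine Set.ncard_le_ncard_of_injOn (fun v ↦ (x / v, y / v)) (fun v hv ↦ ?_) ?_ hfinite
    · obtain ⟨-, hxv, hyv⟩ := mem_filter.1 hv
      exact ⟨hxv, hyv, (div_mul_div_cancel₀ hy).symm⟩
    · intro v _ w _ h
      simpa only [div_eq_mul_inv, mul_right_inj' hx, inv_inj] using congrArg Prod.fst h
  exact (Nat.cast_le.2 hcount).trans (hS _ ((div_eq_one_iff_eq hy).not.2 hxy))

theorem sq_card_le_of_subset_div (hS : IsMulSidon K S) (hX : 0 ∉ X) (hSXV : S ⊆ X / V) :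
    (#S : ℝ) ^ 2 ≤ #V * (#X * (#V + K * (#X - 1))) := by
  have hne {x : G} (hx : x ∈ X) : x ≠ 0 := ne_of_mem_of_not_mem hx hX
  calc (#S : ℝ) ^ 2
      ≤ (∑ v ∈ V, (#(X.bipartiteBelow (fun x v ↦ x / v ∈ S) v) : ℝ)) ^ 2 := by
        gcongr
        exact_mod_cast card_le_sum_card_bipartiteBelow_div hSXV
    _ ≤ #V * (#X * (#V + K * (#X - 1))) :=
      sq_sum_card_bipartiteBelow_le _ fun x hx y hy hxy ↦
        hS.card_filter_div_mem_le (hne hx) (hne hy) hxy V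

theorem sq_card_le_mul_pow_three (hS : IsMulSidon K S) (hK : 1 ≤ K) (hX : 0 ∉ X)
    (hSXV : S ⊆ X / V) {n : ℕ} (hVn : #V ≤ n) (hXn : #X ≤ 2 * n) :
    (#S : ℝ) ^ 2 ≤ 6 * K * n ^ 3 := by
  have hVn : (#V : ℝ) ≤ n := mod_cast hVn
  have hXn : (#X : ℝ) ≤ 2 * n := mod_cast hXn
  calc (#S : ℝ) ^ 2 ≤ #V * (#X * (#V + K * (#X - 1))) := hS.sq_card_le_of_subset_div hX hSXV
    _ ≤ #V * (#X * (#V + K * #X)) := by gcongr; linarith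
    _ ≤ n * (2 * n * (K * n + K * (2 * n))) := by
      gcongr
      exact hVn.trans (le_mul_of_one_le_left n.cast_nonneg hK)
    _ = 6 * K * n ^ 3 := by ring

end IsMulSidon

/-- The arithmetic progression `{θ + 1, …, θ + n}` of length `n`. The numerators and denominators
of the extremal set are taken from such progressions. -/
noncomputable def shiftedInterval (θ : ℝ) (n : ℕ) : Finset ℝ :=
  (Icc 1 n).image fun j : ℕ ↦ θ + j

/-- The set `{a / (θ + b) : 1 ≤ a, b ≤ n}`, which is the extremal set when `θ` is irrational. -/
noncomputable def shiftedQuotients (θ : ℝ) (n : ℕ) : Finset ℝ :=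
  shiftedInterval 0 n / shiftedInterval θ n

variable {θ : ℝ} {n : ℕ}

theorem card_shiftedInterval (θ : ℝ) (n : ℕ) : #(shiftedInterval θ n) = n := by
  have hinj : Function.Injective fun j : ℕ ↦ θ + j :=
    (add_right_injective θ).comp Nat.cast_injective
  rw [shiftedInterval, card_image_of_injective _ hinj, Nat.card_Icc, Nat.add_sub_cancel]

theorem zero_notMem_shiftedInterval_zero (n : ℕ) : 0 ∉ shiftedInterval 0 n := by
  simp [shiftedInterval]

theorem zero_notMem_shiftedInterval_of_irrational (hθ : Irrational θ) (n : ℕ) :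
    0 ∉ shiftedInterval θ n := by
  simp [shiftedInterval, (hθ.add_natCast _).ne_zero]

theorem shiftedQuotients_eq_image (θ : ℝ) (n : ℕ) :
    shiftedQuotients θ n =
      (Icc 1 n ×ˢ Icc 1 n).image fun p : ℕ × ℕ ↦ (p.1 : ℝ) / (θ + p.2) := by
  ext x
  simp [shiftedQuotients, shiftedInterval, mem_div, and_assoc]

theorem eq_and_eq_of_div_add_eq_div_add (hθ : Irrational θ) {a b c d : ℕ} (ha : a ≠ 0)
    (h : (a : ℝ) / (θ + b) = c / (θ + d)) : a = c ∧ b = d := by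
  have hcross : (a : ℝ) * (θ + d) = c * (θ + b) :=
    (div_eq_div_iff (hθ.add_natCast b).ne_zero (hθ.add_natCast d).ne_zero).1 h
  have hac : a = c := by
    by_contra hne
    have hsub : (a : ℝ) - c ≠ 0 := sub_ne_zero.2 (Nat.cast_injective.ne hne)
    refine hθ ⟨((c : ℚ) * b - a * d) / (a - c), ?_⟩
    push_cast
    rw [div_eq_iff hsub]
    linarith
  subst hac
  exact ⟨rfl, by simpa [ha, eq_comm] using hcross⟩

theorem card_shiftedQuotients (hθ : Irrational θ) (n : ℕ) : #(shiftedQuotients θ n) = n ^ 2 := by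
  rw [shiftedQuotients_eq_image, card_image_of_injOn, card_product, Nat.card_Icc,
    Nat.add_sub_cancel, sq]
  rintro ⟨a, b⟩ hab ⟨c, d⟩ - h
  have ha : 1 ≤ a := (mem_Icc.1 (mem_product.1 hab).1).1
  exact Prod.ext_iff.2 (eq_and_eq_of_div_add_eq_div_add hθ (Nat.one_le_iff_ne_zero.1 ha) h)

theorem image_add_one_shiftedQuotients_subset (hθ : Irrational θ) (n : ℕ) :
    (shiftedQuotients θ n).image (· + 1) ⊆ shiftedInterval θ (2 * n) / shiftedInterval θ n := by
  rw [shiftedQuotients_eq_image, image_image, image_subset_iff]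
  rintro ⟨a, b⟩ hab
  obtain ⟨ha, hb⟩ := mem_product.1 hab
  have hsum : a + b ∈ Icc 1 (2 * n) := by grind
  refine mem_div.2 ⟨_, mem_image_of_mem _ hsum, _, mem_image_of_mem _ hb, ?_⟩
  have hb₀ : θ + b ≠ 0 := (hθ.add_natCast b).ne_zero
  simp only [Function.comp_apply]
  field_simp
  push_cast
  ring

theorem IsMulSidon.sq_card_le_of_subset_shiftedQuotients (hθ : Irrational θ) {K : ℝ} (hK : 1 ≤ K)
    {S : Finset ℝ} (hSidon : IsMulSidon K S)
    (hS : S ⊆ shiftedQuotients θ n ∨ S ⊆ (shiftedQuotients θ n).image (· + 1)) :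
    (#S : ℝ) ^ 2 ≤ 6 * K * n ^ 3 := by
  have hV : #(shiftedInterval θ n) ≤ n := (card_shiftedInterval θ n).le
  rcases hS with hS | hS
  · exact hSidon.sq_card_le_mul_pow_three hK (zero_notMem_shiftedInterval_zero n) hS hV
      (by grind [card_shiftedInterval])
  · exact hSidon.sq_card_le_mul_pow_three hK (zero_notMem_shiftedInterval_of_irrational hθ _)
      (hS.trans (image_add_one_shiftedQuotients_subset hθ n)) hV (card_shiftedInterval θ _).le

theorem IsMulSidon.card_le_of_subset_shiftedQuotients (hθ : Irrational θ) {K : ℝ} (hK : 1 ≤ K)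
    {S : Finset ℝ} (hSidon : IsMulSidon K S)
    (hS : S ⊆ shiftedQuotients θ n ∨ S ⊆ (shiftedQuotients θ n).image (· + 1)) :
    (#S : ℝ) ≤ 3 * √K * (#(shiftedQuotients θ n) : ℝ) ^ (3 / 4 : ℝ) := by
  have hpow : ((#(shiftedQuotients θ n) : ℝ) ^ (3 / 4 : ℝ)) ^ 2 = n ^ 3 := by
    rw [card_shiftedQuotients hθ, Nat.cast_pow, ← Real.rpow_natCast_mul n.cast_nonneg,
      ← Real.rpow_mul_natCast n.cast_nonneg, ← Real.rpow_natCast]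
    norm_num
  refine le_of_sq_le_sq ?_ (by positivity)
  calc (#S : ℝ) ^ 2 ≤ 6 * K * n ^ 3 := hSidon.sq_card_le_of_subset_shiftedQuotients hθ hK hS
    _ ≤ 9 * K * n ^ 3 := by gcongr; norm_num
    _ = (3 * √K * (#(shiftedQuotients θ n) : ℝ) ^ (3 / 4 : ℝ)) ^ 2 := by
      rw [mul_pow, mul_pow, hpow, Real.sq_sqrt (by positivity)]
      norm_num

end

theorem stmt11_general :
    ∃ C : ℝ, 0 < C ∧
      ∀ N : ℕ, ∃ A : Finset ℝ, N ≤ A.card ∧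
        ∀ K : ℝ, 1 ≤ K →
          ∀ S : Finset ℝ, (S ⊆ A ∨ S ⊆ A.image (· + 1)) → IsMulSidon K S →
            (S.card : ℝ) ≤ C * √K * (A.card : ℝ) ^ ((3 : ℝ) / 4) := by
  refine ⟨3, by norm_num, fun N ↦ ⟨shiftedQuotients √2 N, ?_, fun K hK S hS hSidon ↦ ?_⟩⟩
  · rw [card_shiftedQuotients irrational_sqrt_two]
    exact Nat.le_self_pow two_ne_zero N
  · exact hSidon.card_le_of_subset_shiftedQuotients irrational_sqrt_two hK hS

theorem stmt11 :
    ∃ C : ℝ, 0 < C ∧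
      ∀ k : ℕ, 1 ≤ k → ∀ N : ℕ, 1 ≤ N →
        ∃ A : Finset ℝ, N ≤ A.card ∧
          ∀ S : Finset ℝ, (S ⊆ A ∨ S ⊆ A.image (· + 1)) → IsMulSidon (k : ℝ) S →
            (S.card : ℝ) ≤ C * Real.sqrt k * (A.card : ℝ) ^ ((3 : ℝ) / 4) := by
  obtain ⟨C, hC, h⟩ := stmt11_general
  exact ⟨C, hC, fun k hk N _ ↦ (h N).imp fun _ hA ↦ ⟨hA.1, hA.2 k (mod_cast hk)⟩⟩
end
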